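/- Let n and N be integers with 2 ≤ n and n dividing N. Then there exists a subset S' of 𝒫(n,N) satisfying: (a) |S' ∩ 𝒫(n,N,H)| / |𝒫(n,N,H)| = 1 − O(log H / √H) as H → ∞; and (b) for every P ∈ S' there exists a constant α with 0 < α < 1 such that the number of n-free integers d with |d| ≤ x for which the twisted superelliptic curve y^n = d·P(t) has a non-trivial ℚ-rational point is O(x · (log x)^{−α}) as x → ∞. -/

import Mathlib

/-!
The set consists of the polynomials of `𝒫(n,N)` irreducible over `ℚ` (all of `𝒫(n,0)` when `N = 0`).

*Density.* By Gauss's lemma a reducible `P` factors over `ℤ` as `Q R` with both degrees positive,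
and multiplicativity of the Mahler measure gives `height Q * height R ≪ height P` (Gelfond). Counting
pairs `(Q, R)` dyadically in the height of `Q` yields `O(H ^ N log H)` reducible polynomials of degree
`N` and height at most `H` (`ncard_reducible_le`), against at least `H ^ (N + 1)` polynomials in all.

*Local obstruction.* Let `p` be a prime modulo which `P` has no root in the projective line
(`goodPrimes`). As `n ∣ N`, clearing denominators turns a rational point on `y ^ n = d P(t)` into
`z ^ n = d F(a, b)` with `F` the binary form of `P` and `a`, `b` coprime. Then `p` does not divide
`F(a, b)`, so the exponent of `p` in `d` is a multiple of `n`, and `p ∤ d` because `d` is `n`-free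
(`not_dvd_of_hasNontrivialPoint`). Hence `|d|` has no prime factor in `goodPrimes P`.

*Many good primes.* For irreducible `P` of degree at least `2` the good primes have positive lower
Dirichlet density. Instead of Chebotarev's theorem, only the simple pole at `1` of Dedekind zeta
functions is used. In `K = ℚ(θ)`, `θ` a root of `P`, the number of prime ideals of norm `p` has mean
at most `1` over the primes `p`, so the densities of the primes with at least one and with at least
two such ideals add up to at most `1`. A prime with an ideal of norm `p` in the splitting field `L` of
`P` has, with finitely many exceptions, two roots of `P` modulo `p`, hence two ideals of norm `p` in
`K`; such primes have lower density at least `1 / [L : ℚ]`. So a positive proportion of the primes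
has no ideal of norm `p` in `K`, thus no root of `P` (`le_primeSum_noRootPrimes_aux`). All densities
are expressed through `∑ p ^ (-s)` compared with `log (1 / (s - 1))` as `s → 1⁺`.

*Sieve.* The weighting `log m = ∑_{k ∣ m} Λ(k)` and Chebyshev's bound reduce the number of integers up
to `x` free of good primes to the sum of their reciprocals, which is estimated by an Euler product at
`s = 1 + 1 / log x` (`card_sifted_le`).
-/

open Polynomial Filter Asymptotics

/-- `𝒫(n,N)`: integer polynomials of degree `N` all of whose roots (in `ℂ`) have
multiplicity at most `n - 1`. -/
def PolySet (n N : ℕ) : Set (Polynomial ℤ) :=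
  {P | P.natDegree = N ∧ P ≠ 0 ∧
    ∀ z : ℂ, (P.map (Int.castRingHom ℂ)).rootMultiplicity z ≤ n - 1}

/-- The height of `P` (max of the absolute values of the coefficients) is at most `H`. -/
def HeightLE (P : Polynomial ℤ) (H : ℕ) : Prop := ∀ i, |P.coeff i| ≤ (H : ℤ)

/-- `d` is an `n`-free integer: `d ∉ {0,1}` and no `p^n` divides `d`. -/
def NFree (n : ℕ) (d : ℤ) : Prop :=
  d ≠ 0 ∧ d ≠ 1 ∧ ∀ p : ℕ, p.Prime → ¬ ((p : ℤ) ^ n ∣ d)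

/-- The twisted superelliptic curve `y^n = d·P(t)` has a non-trivial `ℚ`-rational point:
either an affine point with `y ≠ 0`, or (when `n ∣ N`) a point at infinity, i.e.
`d · leadingCoeff P` is a nonzero `n`-th power in `ℚ`. -/
def HasNontrivialPoint (n N : ℕ) (P : Polynomial ℤ) (d : ℤ) : Prop :=
  (∃ t y : ℚ, y ≠ 0 ∧ y ^ n = (d : ℚ) * Polynomial.aeval t P) ∨
  (n ∣ N ∧ ∃ y : ℚ, y ≠ 0 ∧ y ^ n = (d : ℚ) * (P.leadingCoeff : ℚ))

/-! ### Upper bound sieve for a set of primes -/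

/-- The Dirichlet series `∑_{p ∈ S} p ^ (-s)`; used for sets `S` of primes. -/
noncomputable def primeSum (S : Set ℕ) (s : ℝ) : ℝ :=
  ∑' p : ℕ, S.indicator (fun p : ℕ => (p : ℝ) ^ (-s)) p

lemma summable_indicator_rpow (S : Set ℕ) {s : ℝ} (hs : 1 < s) :
    Summable (S.indicator (fun p : ℕ => (p : ℝ) ^ (-s))) :=
  (Real.summable_nat_rpow.mpr (by linarith)).indicator S

open Classical in
/-- The completely multiplicative function `m ↦ m ^ (-s)` restricted to the integers having no
prime factor in `S`. -/
noncomputable def sievedPow (S : Set ℕ) (hS : ∀ p ∈ S, p.Prime) (s : ℝ) (hs : 1 < s) :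
    ℕ →*₀ ℝ where
  toFun m := if ∀ p ∈ S, ¬ p ∣ m then (m : ℝ) ^ (-s) else 0
  map_zero' := by
    have : (0 : ℝ) ^ (-s) = 0 := Real.zero_rpow (by linarith)
    simp [this]
  map_one' := by
    have : ∀ p ∈ S, ¬ p ∣ 1 := fun p hp h => (hS p hp).one_lt.ne' (Nat.dvd_one.mp h)
    rw [if_pos this]; simp
  map_mul' a b := by
    have key : (∀ p ∈ S, ¬ p ∣ a * b) ↔ (∀ p ∈ S, ¬ p ∣ a) ∧ (∀ p ∈ S, ¬ p ∣ b) := by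
      constructor
      · intro h
        exact ⟨fun p hp h1 => h p hp (h1.mul_right _), fun p hp h1 => h p hp (h1.mul_left _)⟩
      · rintro ⟨h1, h2⟩ p hp h
        rcases (hS p hp).dvd_mul.mp h with h | h
        exacts [h1 p hp h, h2 p hp h]
    by_cases h1 : ∀ p ∈ S, ¬ p ∣ a <;> by_cases h2 : ∀ p ∈ S, ¬ p ∣ b
    · rw [if_pos h1, if_pos h2, if_pos (key.mpr ⟨h1, h2⟩), Nat.cast_mul,
        Real.mul_rpow (by positivity) (by positivity)]
    all_goals
      have : ¬ ∀ p ∈ S, ¬ p ∣ a * b := fun h => by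
        have := key.mp h
        tauto
      rw [if_neg this]
      simp only [h1, h2, if_false, mul_zero, zero_mul]
      try simp

open Classical in
lemma sievedPow_apply (S : Set ℕ) (hS : ∀ p ∈ S, p.Prime) (s : ℝ) (hs : 1 < s) (m : ℕ) :
    sievedPow S hS s hs m = if ∀ p ∈ S, ¬ p ∣ m then (m : ℝ) ^ (-s) else 0 := rfl

lemma summable_sievedPow (S : Set ℕ) (hS : ∀ p ∈ S, p.Prime) (s : ℝ) (hs : 1 < s) :
    Summable (sievedPow S hS s hs) := by
  refine Summable.of_nonneg_of_le (fun m => ?_) (fun m => ?_)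
    (Real.summable_nat_rpow.mpr (by linarith : -s < -1))
  · rw [sievedPow_apply]; split_ifs <;> positivity
  · rw [sievedPow_apply]; split_ifs
    · exact le_rfl
    · positivity

lemma sievedPow_nonneg (S : Set ℕ) (hS : ∀ p ∈ S, p.Prime) (s : ℝ) (hs : 1 < s) (m : ℕ) :
    0 ≤ sievedPow S hS s hs m := by
  rw [sievedPow_apply]; split_ifs <;> positivity

lemma rpow_neg_lt_one {p : ℕ} (hp : p.Prime) {s : ℝ} (hs : 1 < s) : (p : ℝ) ^ (-s) < 1 :=
  Real.rpow_lt_one_of_one_lt_of_neg (by exact_mod_cast hp.one_lt) (by linarith)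

open Topology in
/-- Comparing Euler products, removing the primes of `S` from the zeta sum saves a factor
`exp (-∑_{p ∈ S} p ^ (-s))`. -/
lemma tsum_sievedPow_le (S : Set ℕ) (hS : ∀ p ∈ S, p.Prime) (s : ℝ) (hs : 1 < s) :
    ∑' m, sievedPow S hS s hs m ≤ (∑' m : ℕ, (m : ℝ) ^ (-s)) * Real.exp (-primeSum S s) := by
  classical
  have h1 := EulerProduct.eulerProduct_completely_multiplicative (f := sievedPow S hS s hs)
    (summable_sievedPow S hS s hs).norm
  have h2 := EulerProduct.eulerProduct_completely_multiplicative
    (f := sievedPow ∅ (by simp) s hs) (summable_sievedPow ∅ (by simp) s hs).norm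
  have h3 : ∑' m, sievedPow ∅ (by simp) s hs m = ∑' m : ℕ, (m : ℝ) ^ (-s) :=
    tsum_congr fun m => by rw [sievedPow_apply, if_pos (by simp)]
  rw [h3] at h2
  have h4 : Tendsto (fun n : ℕ => Real.exp (-∑ p ∈ Finset.range n,
      S.indicator (fun p : ℕ => (p : ℝ) ^ (-s)) p)) atTop (𝓝 (Real.exp (-primeSum S s))) :=
    (Real.continuous_exp.tendsto _).comp
      ((summable_indicator_rpow S hs).hasSum.tendsto_sum_nat.neg)
  refine le_of_tendsto_of_tendsto' h1 (h2.mul h4) fun n => ?_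
  have h5 : ∑ p ∈ Finset.range n, S.indicator (fun p : ℕ => (p : ℝ) ^ (-s)) p =
      ∑ p ∈ n.primesBelow, S.indicator (fun p : ℕ => (p : ℝ) ^ (-s)) p := by
    rw [Nat.primesBelow, Finset.sum_filter]
    refine Finset.sum_congr rfl fun p _ => ?_
    split_ifs with hp
    · rfl
    · exact Set.indicator_of_notMem (fun h => hp (hS p h)) _
  rw [h5, ← Finset.sum_neg_distrib, Real.exp_sum, ← Finset.prod_mul_distrib]
  refine Finset.prod_le_prod (fun p hp => ?_) fun p hp => ?_
  · have hp' := Nat.prime_of_mem_primesBelow hp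
    have := rpow_neg_lt_one hp' hs
    rw [inv_nonneg, sievedPow_apply]
    split_ifs <;> linarith
  · have hp' := Nat.prime_of_mem_primesBelow hp
    have hlt := rpow_neg_lt_one hp' hs
    rw [sievedPow_apply, sievedPow_apply, if_pos (show ∀ q ∈ (∅ : Set ℕ), ¬ q ∣ p by simp)]
    by_cases hpS : p ∈ S
    · rw [if_neg (fun h => h p hpS dvd_rfl), Set.indicator_of_mem hpS, sub_zero, inv_one,
        inv_mul_eq_div, le_div_iff₀ (by linarith), one_mul]
      linarith [Real.add_one_le_exp (-(p : ℝ) ^ (-s))]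
    · rw [Set.indicator_of_notMem hpS, if_pos]
      · simp
      · intro q hq hqp
        rcases (Nat.dvd_prime hp').mp hqp with h | h
        · exact (hS q hq).one_lt.ne' h
        · exact hpS (h ▸ hq)

open Classical in
/-- The integers of `[1, x]` without prime factor in `S`. -/
noncomputable def sifted (S : Set ℕ) (x : ℕ) : Finset ℕ :=
  (Finset.Icc 1 x).filter fun m => ∀ p ∈ S, ¬ p ∣ m

open ArithmeticFunction in
/-- Writing `log m = ∑_{k ∣ m} Λ k` and exchanging sums, Chebyshev's bound reduces the counting of
sifted integers to the sum of their reciprocals. -/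
lemma card_sifted_mul_log_le (S : Set ℕ) (x : ℕ) (hx : 1 ≤ x) :
    ((sifted S x).card : ℝ) * Real.log x ≤
      (Real.log 4 + 5) * x * ∑ m ∈ sifted S x, (m : ℝ)⁻¹ := by
  classical
  have hpos : ∀ m ∈ sifted S x, 1 ≤ m ∧ m ≤ x := fun m hm => by
    simpa using (Finset.mem_filter.mp hm).1
  have hx0 : (0 : ℝ) < x := by exact_mod_cast hx
  have e1 : ((sifted S x).card : ℝ) * Real.log x =
      ∑ m ∈ sifted S x, Real.log (x / m) + ∑ m ∈ sifted S x, Real.log m := by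
    rw [← Finset.sum_add_distrib, ← nsmul_eq_mul, ← Finset.sum_const]
    refine Finset.sum_congr rfl fun m hm => ?_
    have : (0 : ℝ) < m := by exact_mod_cast (hpos m hm).1
    rw [Real.log_div hx0.ne' this.ne']; ring
  have e2 : ∑ m ∈ sifted S x, Real.log (x / m) ≤ x * ∑ m ∈ sifted S x, (m : ℝ)⁻¹ := by
    rw [Finset.mul_sum]
    refine Finset.sum_le_sum fun m hm => ?_
    rw [← div_eq_mul_inv]
    exact (Real.log_le_self (by positivity))
  have e3 : ∑ m ∈ sifted S x, Real.log m ≤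
      ∑ j ∈ sifted S x, Chebyshev.psi ((x : ℝ) / j) := by
    have : ∀ m ∈ sifted S x, Real.log m =
        ∑ j ∈ sifted S x, if j ∣ m then Λ (m / j) else 0 := by
      intro m hm
      rw [← vonMangoldt_sum, ← Nat.sum_div_divisors, ← Finset.sum_filter]
      refine Finset.sum_congr ?_ fun _ _ => rfl
      ext j
      simp only [Nat.mem_divisors, Finset.mem_filter, sifted, Finset.mem_Icc] at hm ⊢
      constructor
      · rintro ⟨h1, h2⟩
        exact ⟨⟨⟨Nat.pos_of_dvd_of_pos h1 hm.1.1, (Nat.le_of_dvd hm.1.1 h1).trans hm.1.2⟩,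
          fun p hp hpj => hm.2 p hp (hpj.trans h1)⟩, h1⟩
      · rintro ⟨_, h⟩
        exact ⟨h, by omega⟩
    rw [Finset.sum_congr rfl this, Finset.sum_comm]
    refine Finset.sum_le_sum fun j hj => ?_
    rw [Chebyshev.psi, Nat.floor_div_eq_div, ← Finset.sum_filter]
    have hj0 := (hpos j hj).1
    refine (Finset.sum_image (f := fun k => Λ k) (g := fun m => m / j) (s := (sifted S x).filter (j ∣ ·))
      ?_).symm.trans_le ?_
    · intro a ha b hb hab
      have ha := (Finset.mem_filter.mp (Finset.mem_coe.mp ha)).2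
      have hb := (Finset.mem_filter.mp (Finset.mem_coe.mp hb)).2
      simp only at hab
      rw [← Nat.div_mul_cancel ha, ← Nat.div_mul_cancel hb, hab]
    · refine Finset.sum_le_sum_of_subset_of_nonneg ?_ fun _ _ _ => vonMangoldt_nonneg
      intro k hk
      obtain ⟨m, hm, rfl⟩ := Finset.mem_image.mp hk
      obtain ⟨hm1, hm2⟩ := Finset.mem_filter.mp hm
      have := hpos m hm1
      exact Finset.mem_Ioc.mpr ⟨Nat.div_pos (Nat.le_of_dvd (by omega) hm2) hj0,
        Nat.div_le_div_right this.2⟩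
  have e4 : ∑ j ∈ sifted S x, Chebyshev.psi ((x : ℝ) / j) ≤
      (Real.log 4 + 4) * x * ∑ m ∈ sifted S x, (m : ℝ)⁻¹ := by
    rw [Finset.mul_sum]
    refine Finset.sum_le_sum fun m hm => ?_
    rw [mul_assoc, ← div_eq_mul_inv]
    exact Chebyshev.psi_le_const_mul_self (by positivity)
  rw [e1]
  linarith

open Topology in
/-- Upper bound sieve: if `∑_{p ∈ S} p ^ (-s) ≥ δ log (1 / (s - 1)) - C` as `s → 1⁺`, then
`O (x (log x) ^ (-δ))` integers up to `x` are free of prime factors in `S`. The Dirichlet series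
is evaluated at `s = 1 + 1 / log x`. -/
theorem card_sifted_le (S : Set ℕ) (hS : ∀ p ∈ S, p.Prime) (δ C : ℝ)
    (h : ∀ᶠ s : ℝ in 𝓝[>] 1, δ * (-Real.log (s - 1)) - C ≤ primeSum S s) :
    ∃ B : ℝ, ∀ᶠ x : ℕ in atTop,
      ((sifted S x).card : ℝ) ≤ B * ((x : ℝ) * Real.log x ^ (-δ)) := by
  classical
  have hz : ∀ᶠ s : ℝ in 𝓝[>] 1, (s - 1) * ∑' m : ℕ, (m : ℝ) ^ (-s) ≤ 2 := by
    have := (tendsto_sub_mul_tsum_nat_rpow.eventually (ge_mem_nhds (by norm_num : (1 : ℝ) < 2)))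
    filter_upwards [this] with s hs
    refine le_trans (le_of_eq ?_) hs
    congr 1
    exact tsum_congr fun m => by rw [Real.rpow_neg (by positivity), one_div]
  have hlog : Tendsto (fun x : ℕ => Real.log x) atTop atTop :=
    Real.tendsto_log_atTop.comp tendsto_natCast_atTop_atTop
  have ht : Tendsto (fun x : ℕ => 1 + (Real.log x)⁻¹) atTop (𝓝[>] 1) := by
    refine tendsto_nhdsWithin_iff.mpr ⟨?_, ?_⟩
    · simpa using (tendsto_inv_atTop_zero.comp hlog).const_add 1
    · filter_upwards [hlog.eventually_gt_atTop 0] with x hx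
      simpa using hx
  refine ⟨(Real.log 4 + 5) * (Real.exp 1 * (2 * Real.exp C)), ?_⟩
  filter_upwards [ht.eventually h, ht.eventually hz, hlog.eventually_gt_atTop 0,
    eventually_ge_atTop 1] with x h1 h2 h3 h4
  set l := Real.log x with hl
  have hx0 : (0 : ℝ) < x := by exact_mod_cast h4
  have hs : 1 < 1 + l⁻¹ := by simpa using h3
  have hsum : ∑ m ∈ sifted S x, (m : ℝ)⁻¹ ≤ Real.exp 1 * ∑' m, sievedPow S hS (1 + l⁻¹) hs m := by
    refine le_trans ?_ (mul_le_mul_of_nonneg_left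
      ((summable_sievedPow S hS _ hs).sum_le_tsum (sifted S x)
        fun m _ => sievedPow_nonneg S hS _ hs m) (Real.exp_pos 1).le)
    rw [Finset.mul_sum]
    refine Finset.sum_le_sum fun m hm => ?_
    obtain ⟨hm1, hm2⟩ := Finset.mem_filter.mp hm
    rw [Finset.mem_Icc] at hm1
    have hm0 : (0 : ℝ) < m := by exact_mod_cast hm1.1
    rw [sievedPow_apply, if_pos hm2, neg_add, Real.rpow_add hm0, Real.rpow_neg_one,
      Real.rpow_def_of_pos hm0, mul_left_comm, ← Real.exp_add]
    refine le_mul_of_one_le_right (by positivity) (Real.one_le_exp ?_)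
    have : Real.log m ≤ l := Real.log_le_log hm0 (by exact_mod_cast hm1.2)
    have : Real.log m * l⁻¹ ≤ l * l⁻¹ := by gcongr
    rw [mul_inv_cancel₀ h3.ne'] at this
    linarith
  have hz' : ∑' m : ℕ, (m : ℝ) ^ (-(1 + l⁻¹)) ≤ 2 * l := by
    rw [add_sub_cancel_left, inv_mul_le_iff₀ h3] at h2
    linarith
  have hE : Real.exp (-primeSum S (1 + l⁻¹)) ≤ Real.exp C * l ^ (-δ) := by
    rw [add_sub_cancel_left, Real.log_inv, neg_neg] at h1
    rw [Real.rpow_def_of_pos h3, ← Real.exp_add]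
    exact Real.exp_le_exp.mpr (by linarith)
  have h5 := card_sifted_mul_log_le S x h4
  have h6 : ∑ m ∈ sifted S x, (m : ℝ)⁻¹ ≤ Real.exp 1 * ((2 * l) * (Real.exp C * l ^ (-δ))) := by
    refine hsum.trans (mul_le_mul_of_nonneg_left ((tsum_sievedPow_le S hS _ hs).trans ?_)
      (Real.exp_pos 1).le)
    gcongr
  have h7 : (0 : ℝ) ≤ (Real.log 4 + 5) * x := by
    have : 0 ≤ Real.log 4 := Real.log_nonneg (by norm_num)
    positivity
  have h8 := h5.trans (mul_le_mul_of_nonneg_left h6 h7)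
  refine le_of_mul_le_mul_right (h8.trans (le_of_eq ?_)) h3
  ring

/-! ### Primes of degree one and the pole of the Dedekind zeta function -/

section DedekindZeta

open NumberField Topology

variable (K : Type*) [Field K] [NumberField K]

/-- The number of ideals of norm `n` in the ring of integers of `K`. -/
noncomputable def idealCount (n : ℕ) : ℕ := Nat.card {I : Ideal (𝓞 K) // Ideal.absNorm I = n}

/-- The Dedekind zeta function of `K` at a real argument. The term `n = 0` vanishes, as
`0 ^ (-s) = 0` for real `s ≠ 0`. -/
noncomputable def realZeta (s : ℝ) : ℝ := ∑' n : ℕ, (idealCount K n : ℝ) * (n : ℝ) ^ (-s)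

lemma dedekindZeta_eq_realZeta {s : ℝ} (hs : 1 < s) : dedekindZeta K s = (realZeta K s : ℂ) := by
  rw [dedekindZeta, LSeries, realZeta, Complex.ofReal_tsum]
  refine tsum_congr fun n => ?_
  rcases Nat.eq_zero_or_pos n with rfl | hn
  · simp [Real.zero_rpow (show -s ≠ 0 by linarith)]
  · rw [LSeries.term_of_ne_zero hn.ne', Complex.ofReal_mul, Complex.ofReal_natCast,
      Complex.ofReal_cpow (by positivity), Complex.ofReal_natCast, Complex.ofReal_neg,
      Complex.cpow_neg, div_eq_mul_inv]
    rfl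

/-- The simple pole at `1` with positive residue, in logarithmic form. Summability comes for free
since a divergent `tsum` would be `0`. -/
lemma log_realZeta_bounds : ∃ C : ℝ, ∀ᶠ s : ℝ in 𝓝[>] 1,
    1 < s ∧ Summable (fun n : ℕ => (idealCount K n : ℝ) * (n : ℝ) ^ (-s)) ∧
    0 < realZeta K s ∧
    Real.log (realZeta K s) ≤ -Real.log (s - 1) + C ∧
    -Real.log (s - 1) - C ≤ Real.log (realZeta K s) := by
  set ρ := dedekindZeta_residue K with hρ
  have hρ0 : 0 < ρ := dedekindZeta_residue_pos K
  have h1 : Tendsto (fun s : ℝ => (s - 1) * realZeta K s) (𝓝[>] 1) (𝓝 ρ) := by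
    have := (Complex.continuous_re.tendsto _).comp (tendsto_sub_one_mul_dedekindZeta_nhdsGT K)
    refine (this.congr' ?_)
    filter_upwards [self_mem_nhdsWithin] with s hs
    have hs : 1 < s := hs
    rw [Function.comp_apply, dedekindZeta_eq_realZeta K hs]
    rw [← Complex.ofReal_one, ← Complex.ofReal_sub, ← Complex.ofReal_mul, Complex.ofReal_re]
  refine ⟨|Real.log (2 * ρ)| + |Real.log (ρ / 2)|, ?_⟩
  filter_upwards [self_mem_nhdsWithin, h1.eventually (lt_mem_nhds (show ρ / 2 < ρ by linarith)),
    h1.eventually (gt_mem_nhds (show ρ < 2 * ρ by linarith))] with s hs h2 h3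
  have hs : 1 < s := hs
  have hs0 : 0 < s - 1 := by linarith
  have hpos : 0 < realZeta K s := by
    by_contra! h
    nlinarith
  have h4 : Real.log ((s - 1) * realZeta K s) = Real.log (s - 1) + Real.log (realZeta K s) :=
    Real.log_mul hs0.ne' hpos.ne'
  have h5 := Real.log_le_log (by linarith) h2.le
  have h6 := Real.log_le_log (by positivity) h3.le
  rw [h4] at h5 h6
  refine ⟨hs, ?_, hpos, ?_, ?_⟩
  · by_contra h
    rw [realZeta, tsum_eq_zero_of_not_summable h] at hpos
    exact hpos.false
  · have := le_abs_self (Real.log (2 * ρ))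
    have := abs_nonneg (Real.log (ρ / 2))
    linarith
  · have := neg_abs_le (Real.log (ρ / 2))
    have := abs_nonneg (Real.log (2 * ρ))
    linarith

variable {K}

instance (n : ℕ) : Finite {I : Ideal (𝓞 K) // Ideal.absNorm I = n} :=
  Ideal.finite_setOfPred_absNorm_eq n

lemma sum_absNorm_rpow_le_realZeta {s : ℝ}
    (hsum : Summable (fun n : ℕ => (idealCount K n : ℝ) * (n : ℝ) ^ (-s)))
    (𝓘 : Finset (Ideal (𝓞 K))) :
    ∑ I ∈ 𝓘, (Ideal.absNorm I : ℝ) ^ (-s) ≤ realZeta K s := by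
  classical
  rw [← Finset.sum_fiberwise_of_maps_to (t := 𝓘.image fun I => Ideal.absNorm I)
    (fun I hI => Finset.mem_image_of_mem _ hI)]
  refine le_trans (Finset.sum_le_sum fun n hn => ?_)
    (hsum.sum_le_tsum (𝓘.image fun I => Ideal.absNorm I) fun n _ => by positivity)
  rw [Finset.sum_congr rfl (g := fun _ => (n : ℝ) ^ (-s))
    (fun I hI => by rw [(Finset.mem_filter.mp hI).2]), Finset.sum_const, nsmul_eq_mul]
  gcongr
  rw [idealCount, ← Set.coe_ofPred, Nat.card_coe_set_eq, ← Set.ncard_coe_finset]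
  refine Set.ncard_le_ncard (fun I hI => ?_) (Ideal.finite_setOfPred_absNorm_eq n)
  simpa using (Finset.mem_filter.mp (Finset.mem_coe.mp hI)).2

lemma prod_one_add_le_realZeta {s : ℝ}
    (hsum : Summable (fun n : ℕ => (idealCount K n : ℝ) * (n : ℝ) ^ (-s)))
    (G : Finset (Ideal (𝓞 K))) (hG : ∀ I ∈ G, Prime I) :
    ∏ I ∈ G, (1 + (Ideal.absNorm I : ℝ) ^ (-s)) ≤ realZeta K s := by
  classical
  rw [Finset.prod_one_add]
  have h1 : ∀ A ∈ G.powerset, ∏ I ∈ A, (Ideal.absNorm I : ℝ) ^ (-s) =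
      (Ideal.absNorm (∏ I ∈ A, I) : ℝ) ^ (-s) := by
    intro A _
    rw [map_prod, Nat.cast_prod, Real.finsetProd_rpow _ _ (fun _ _ => by positivity)]
  rw [Finset.sum_congr rfl h1]
  rw [← Finset.sum_image (f := fun J : Ideal (𝓞 K) => (Ideal.absNorm J : ℝ) ^ (-s))
    (g := fun A : Finset (Ideal (𝓞 K)) => ∏ I ∈ A, I)]
  · exact sum_absNorm_rpow_le_realZeta hsum _
  · have key : ∀ A ∈ G.powerset, ∀ I ∈ G, I ∈ A ↔ I ∣ ∏ J ∈ A, J := by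
      intro A hA I hI
      refine ⟨fun h => Finset.dvd_prod_of_mem _ h, fun h => ?_⟩
      obtain ⟨J, hJ, hIJ⟩ := ((hG I hI).dvd_finsetProd_iff _).mp h
      have := (hG I hI).associated_of_dvd (hG J (Finset.mem_powerset.mp hA hJ)) hIJ
      rwa [associated_iff_eq.mp this]
    intro A hA B hB hAB
    simp only at hAB
    have hA' := Finset.mem_coe.mp hA
    have hB' := Finset.mem_coe.mp hB
    ext I
    constructor
    · intro h
      have hI := Finset.mem_powerset.mp hA' h
      rwa [key B hB' I hI, ← hAB, ← key A hA' I hI]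
    · intro h
      have hI := Finset.mem_powerset.mp hB' h
      rwa [key A hA' I hI, hAB, ← key B hB' I hI]

lemma prime_of_absNorm_prime {I : Ideal (𝓞 K)} (h : (Ideal.absNorm I).Prime) : Prime I := by
  refine Ideal.prime_of_isPrime ?_ (Ideal.isPrime_of_irreducible_absNorm h)
  rintro rfl
  simp at h
  exact Nat.not_prime_zero h

lemma sub_sq_le_log_one_add {u : ℝ} (hu : 0 ≤ u) : u - u ^ 2 ≤ Real.log (1 + u) := by
  refine le_trans ?_ (Real.le_log_one_add_of_nonneg hu)
  rw [le_div_iff₀ (by linarith)]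
  nlinarith [pow_nonneg hu 3, sq_nonneg u]

lemma rpow_neg_sq_le {p : ℕ} (hp : 1 ≤ p) {s : ℝ} (hs : 1 < s) :
    ((p : ℝ) ^ (-s)) ^ 2 ≤ ((p : ℝ) ^ 2)⁻¹ := by
  have hp' : (1 : ℝ) ≤ p := by exact_mod_cast hp
  rw [← inv_pow]
  refine pow_le_pow_left₀ (by positivity) ?_ 2
  rw [← Real.rpow_neg_one]
  exact Real.rpow_le_rpow_of_exponent_le hp' (by linarith)

variable (K) in
/-- Primes of degree one, of which at most two above each rational prime are counted here, contribute
at most `log ζ_K(s) + O(1)`, that is, `log (1 / (s - 1)) + O(1)`. -/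
lemma primeSum_idealCount_le : ∃ C : ℝ, ∀ᶠ s : ℝ in 𝓝[>] 1,
    primeSum {p | p.Prime ∧ 1 ≤ idealCount K p} s + primeSum {p | p.Prime ∧ 2 ≤ idealCount K p} s
      ≤ -Real.log (s - 1) + C := by
  classical
  obtain ⟨C, hC⟩ := log_realZeta_bounds K
  have hsq : Summable fun n : ℕ => ((n : ℝ) ^ 2)⁻¹ := Real.summable_nat_pow_inv.mpr (by norm_num)
  refine ⟨C + 2 * ∑' n : ℕ, ((n : ℝ) ^ 2)⁻¹, ?_⟩
  filter_upwards [hC] with s ⟨hs, hsum, hpos, hle, _⟩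
  rw [primeSum, primeSum, ← (summable_indicator_rpow _ hs).tsum_add (summable_indicator_rpow _ hs)]
  refine Real.tsum_le_of_sum_range_le (fun p => add_nonneg
    (Set.indicator_nonneg (fun _ _ => by positivity) _)
    (Set.indicator_nonneg (fun _ _ => by positivity) _)) fun X => ?_
  set Q := X.primesBelow with hQ
  -- the ideals of prime norm below `X`
  set G : Finset (Ideal (𝓞 K)) := Q.biUnion fun p =>
    (Ideal.finite_setOfPred_absNorm_eq (S := 𝓞 K) p).toFinset with hGdef
  have hmem : ∀ I : Ideal (𝓞 K), I ∈ G ↔ Ideal.absNorm I ∈ Q := by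
    intro I
    simp [hGdef]
  have hfib : ∀ p ∈ Q, (G.filter fun I => Ideal.absNorm I = p).card = idealCount K p := by
    intro p hp
    rw [idealCount, ← Set.coe_ofPred, Nat.card_coe_set_eq, ← Set.ncard_coe_finset]
    congr 1
    ext I
    simp only [Finset.coe_filter, Set.mem_ofPred_eq, hmem]
    exact ⟨fun h => h.2, fun h => ⟨by rw [h]; exact hp, h⟩⟩
  have h1 := prod_one_add_le_realZeta hsum G fun I hI => prime_of_absNorm_prime
    (Nat.prime_of_mem_primesBelow ((hmem I).mp hI))
  have h2 := Real.log_le_log (Finset.prod_pos fun I _ => by positivity) h1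
  rw [Real.log_prod (fun I _ => by positivity),
    ← Finset.sum_fiberwise_of_maps_to (t := Q) (fun I hI => (hmem I).mp hI)] at h2
  have h3 : ∀ p ∈ Q, ∑ I ∈ G.filter (fun I => Ideal.absNorm I = p),
      Real.log (1 + (Ideal.absNorm I : ℝ) ^ (-s)) =
      idealCount K p * Real.log (1 + (p : ℝ) ^ (-s)) := by
    intro p hp
    rw [← hfib p hp, ← nsmul_eq_mul, ← Finset.sum_const]
    exact Finset.sum_congr rfl fun I hI => by rw [(Finset.mem_filter.mp hI).2]
  rw [Finset.sum_congr rfl h3] at h2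
  have h4 : ∑ p ∈ Finset.range X,
      (({p : ℕ | p.Prime ∧ 1 ≤ idealCount K p} : Set ℕ).indicator (fun p : ℕ => (p : ℝ) ^ (-s)) p +
      ({p : ℕ | p.Prime ∧ 2 ≤ idealCount K p} : Set ℕ).indicator (fun p : ℕ => (p : ℝ) ^ (-s)) p) ≤
      ∑ p ∈ Q, (idealCount K p * Real.log (1 + (p : ℝ) ^ (-s)) + 2 * ((p : ℝ) ^ 2)⁻¹) := by
    rw [hQ, Nat.primesBelow, Finset.sum_filter]
    refine Finset.sum_le_sum fun p _ => ?_
    split_ifs with hp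
    · have e1 := sub_sq_le_log_one_add (show 0 ≤ (p : ℝ) ^ (-s) by positivity)
      have e2 := rpow_neg_sq_le hp.one_lt.le hs
      have e3 : 0 ≤ Real.log (1 + (p : ℝ) ^ (-s)) :=
        Real.log_nonneg (by linarith [show 0 ≤ (p : ℝ) ^ (-s) by positivity])
      have e4 : (0 : ℝ) ≤ ((p : ℝ) ^ 2)⁻¹ := by positivity
      by_cases c2 : 2 ≤ idealCount K p
      · have c1 : 1 ≤ idealCount K p := by omega
        rw [Set.indicator_of_mem (by exact ⟨hp, c1⟩), Set.indicator_of_mem (by exact ⟨hp, c2⟩)]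
        have : (2 : ℝ) ≤ idealCount K p := by exact_mod_cast c2
        nlinarith
      · rw [Set.indicator_of_notMem (s := {p : ℕ | p.Prime ∧ 2 ≤ idealCount K p})
          (fun h => c2 h.2)]
        by_cases c1 : 1 ≤ idealCount K p
        · rw [Set.indicator_of_mem (by exact ⟨hp, c1⟩)]
          have : (1 : ℝ) ≤ idealCount K p := by exact_mod_cast c1
          nlinarith
        · rw [Set.indicator_of_notMem (fun h => c1 h.2)]
          have : 0 ≤ (idealCount K p : ℝ) * Real.log (1 + (p : ℝ) ^ (-s)) := by positivity
          linarith
    · rw [Set.indicator_of_notMem (fun h => hp h.1), Set.indicator_of_notMem (fun h => hp h.1),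
        add_zero]
  have h5 : ∑ p ∈ Q, ((p : ℝ) ^ 2)⁻¹ ≤ ∑' n : ℕ, ((n : ℝ) ^ 2)⁻¹ :=
    hsq.sum_le_tsum _ fun _ _ => by positivity
  refine h4.trans ?_
  rw [Finset.sum_add_distrib, ← Finset.mul_sum]
  linarith

/-- Finite form of the upper bound in the Euler product of `ζ_K`: ideals whose prime factors lie in
the finite set `G` are determined by their exponent vectors. -/
lemma sum_absNorm_rpow_le_prod {s : ℝ} (𝓘 G : Finset (Ideal (𝓞 K)))
    (h𝓘 : ∀ I ∈ 𝓘, I ≠ ⊥ ∧ ∀ P ∈ UniqueFactorizationMonoid.normalizedFactors I, P ∈ G)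
    (hlt : ∀ I ∈ G, (Ideal.absNorm I : ℝ) ^ (-s) < 1) :
    ∑ I ∈ 𝓘, (Ideal.absNorm I : ℝ) ^ (-s) ≤ ∏ I ∈ G, (1 - (Ideal.absNorm I : ℝ) ^ (-s))⁻¹ := by
  classical
  set e : Ideal (𝓞 K) → (∀ P ∈ G, ℕ) := fun I P _ =>
    (UniqueFactorizationMonoid.normalizedFactors I).count P with he
  -- a common bound for all exponents
  set M : ℕ := (𝓘.sup fun I => (UniqueFactorizationMonoid.normalizedFactors I).card) + 1 with hM
  have hprod : ∀ I ∈ 𝓘, ∏ P ∈ G.attach, (P : Ideal (𝓞 K)) ^ (e I P P.2) = I := by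
    intro I hI
    rw [Finset.prod_attach G (fun P => P ^ (UniqueFactorizationMonoid.normalizedFactors I).count P)]
    conv_rhs => rw [← associated_iff_eq.mp
      (UniqueFactorizationMonoid.prod_normalizedFactors (h𝓘 I hI).1)]
    rw [Finset.prod_multiset_count]
    refine (Finset.prod_subset (fun P hP => (h𝓘 I hI).2 P (Multiset.mem_toFinset.mp hP)) ?_).symm
    intro P _ hP
    rw [Multiset.count_eq_zero_of_notMem fun h => hP (Multiset.mem_toFinset.mpr h), pow_zero]
  have h1 : ∏ P ∈ G, ∑ k ∈ Finset.range M, ((Ideal.absNorm P : ℝ) ^ (-s)) ^ k ≤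
      ∏ I ∈ G, (1 - (Ideal.absNorm I : ℝ) ^ (-s))⁻¹ := by
    refine Finset.prod_le_prod (fun P _ => Finset.sum_nonneg fun k _ => by positivity)
      fun P hP => ?_
    rw [← tsum_geometric_of_lt_one (by positivity) (hlt P hP)]
    exact (summable_geometric_of_lt_one (by positivity) (hlt P hP)).sum_le_tsum _
      fun _ _ => by positivity
  refine le_trans ?_ h1
  rw [Finset.prod_sum]
  have hinj : Set.InjOn e 𝓘 := by
    intro I hI J hJ hIJ
    rw [← hprod I hI, ← hprod J hJ, hIJ]
  have h2 : ∀ I ∈ 𝓘, (Ideal.absNorm I : ℝ) ^ (-s) =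
      ∏ P ∈ G.attach, ((Ideal.absNorm (P : Ideal (𝓞 K)) : ℝ) ^ (-s)) ^ (e I P P.2) := by
    intro I hI
    conv_lhs => rw [← hprod I hI]
    rw [map_prod, Nat.cast_prod, ← Real.finsetProd_rpow _ _ (fun _ _ => by positivity)]
    refine Finset.prod_congr rfl fun P _ => ?_
    rw [map_pow, Nat.cast_pow, ← Real.rpow_natCast, ← Real.rpow_natCast,
      ← Real.rpow_mul (by positivity), ← Real.rpow_mul (by positivity), mul_comm]
  rw [Finset.sum_congr rfl h2, ← Finset.sum_image (f := fun a : (∀ P ∈ G, ℕ) =>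
    ∏ P ∈ G.attach, ((Ideal.absNorm (P : Ideal (𝓞 K)) : ℝ) ^ (-s)) ^ (a P P.2)) hinj]
  refine Finset.sum_le_sum_of_subset_of_nonneg ?_ fun _ _ _ => by positivity
  intro a ha
  obtain ⟨I, hI, rfl⟩ := Finset.mem_image.mp ha
  refine Finset.mem_pi.mpr fun P hP => Finset.mem_range.mpr ?_
  exact Nat.lt_succ_of_le ((Multiset.count_le_card _ _).trans
    (Finset.le_sup (f := fun I => (UniqueFactorizationMonoid.normalizedFactors I).card) hI))

/-- A nonzero prime ideal has norm a power of the rational prime it contains. -/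
lemma exists_absNorm_eq_prime_pow {I : Ideal (𝓞 K)} (hI : Prime I) :
    ∃ p k : ℕ, p.Prime ∧ 1 ≤ k ∧ Ideal.absNorm I = p ^ k ∧ (p : 𝓞 K) ∈ I := by
  have hP : I.IsPrime := Ideal.isPrime_of_prime hI
  have hM : I.IsMaximal := hP.isMaximal hI.ne_zero
  let : Field (𝓞 K ⧸ I) := Ideal.Quotient.field I
  have hfin : Finite (𝓞 K ⧸ I) := Ideal.finiteQuotientOfFreeOfNeBot I hI.ne_zero
  let := Fintype.ofFinite (𝓞 K ⧸ I)
  have h1 : IsPrimePow (Ideal.absNorm I) := by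
    have := FiniteField.isPrimePow_card (𝓞 K ⧸ I)
    rwa [← Nat.card_eq_fintype_card] at this
  obtain ⟨p, k, hp, hk, h⟩ := h1
  refine ⟨p, k, hp.nat_prime, hk, h.symm, ?_⟩
  have := Ideal.absNorm_mem I
  rw [← h, Nat.cast_pow] at this
  exact hP.mem_of_pow_mem _ this

lemma card_primes_above_le (p : ℕ) (hp : p.Prime) (G : Finset (Ideal (𝓞 K)))
    (hG : ∀ I ∈ G, Prime I ∧ (p : 𝓞 K) ∈ I) : G.card ≤ Module.finrank ℚ K := by
  classical
  have h1 : ∏ I ∈ G, I ∣ Ideal.span {(p : 𝓞 K)} := by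
    refine Finset.prod_primes_dvd _ (fun I hI => (hG I hI).1) fun I hI => ?_
    rw [Ideal.dvd_span_singleton]
    exact (hG I hI).2
  have h2 := Ideal.absNorm_dvd_absNorm_of_le (Ideal.le_of_dvd h1)
  rw [Ideal.absNorm_span_natCast, map_prod, RingOfIntegers.rank] at h2
  have h3 := Nat.le_of_dvd (pow_pos hp.pos _) h2
  have h4 : p ^ G.card ≤ ∏ I ∈ G, Ideal.absNorm I := by
    rw [← Finset.prod_const]
    refine Finset.prod_le_prod' fun I hI => ?_
    obtain ⟨q, k, hq, hk, h, hqI⟩ := exists_absNorm_eq_prime_pow (hG I hI).1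
    have : q ∣ Ideal.absNorm I := h ▸ dvd_pow_self q (by omega)
    have hpq : p = q := by
      by_contra hne
      have hcop : Nat.Coprime p q := (Nat.coprime_primes hp hq).mpr hne
      have h5 : (1 : 𝓞 K) ∈ I := by
        obtain ⟨a, b, hab⟩ := Nat.isCoprime_iff_coprime.mpr hcop
        have : (a : 𝓞 K) * p + b * q = 1 := by exact_mod_cast congrArg (Int.cast : ℤ → 𝓞 K) hab
        rw [← this]
        exact I.add_mem (I.mul_mem_left _ (hG I hI).2) (I.mul_mem_left _ hqI)
      exact (Ideal.isPrime_of_prime (hG I hI).1).ne_top ((Ideal.eq_top_iff_one I).mpr h5)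
    rw [h, hpq]
    exact Nat.le_self_pow (by omega) q
  exact (Nat.pow_le_pow_iff_right hp.one_lt).mp (h4.trans h3)

lemma inv_one_sub_le_exp {w : ℝ} (h1 : w ≤ 1 / 2) :
    (1 - w)⁻¹ ≤ Real.exp (w + 2 * w ^ 2) := by
  refine le_trans ?_ (Real.add_one_le_exp _)
  rw [inv_le_iff_one_le_mul₀ (by linarith)]
  nlinarith [mul_nonneg (sq_nonneg w) (by linarith : 0 ≤ 1 - 2 * w)]

variable (K) in
/-- The primes of degree one carry the pole of `ζ_K`: rational primes having a degree one prime
above them satisfy `∑ p ^ (-s) ≥ [K : ℚ]⁻¹ log (1 / (s - 1)) - O(1)`. -/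
lemma le_primeSum_idealCount : ∃ C : ℝ, ∀ᶠ s : ℝ in 𝓝[>] 1,
    (Module.finrank ℚ K : ℝ)⁻¹ * (-Real.log (s - 1)) - C ≤
      primeSum {p | p.Prime ∧ 1 ≤ idealCount K p} s := by
  classical
  obtain ⟨C, hC⟩ := log_realZeta_bounds K
  have hsq : Summable fun n : ℕ => ((n : ℝ) ^ 2)⁻¹ := Real.summable_nat_pow_inv.mpr (by norm_num)
  set d := Module.finrank ℚ K with hd
  have hd0 : (0 : ℝ) < d := by exact_mod_cast Module.finrank_pos
  set D := ∑' n : ℕ, ((n : ℝ) ^ 2)⁻¹ with hD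
  set T : Set ℕ := {p | p.Prime ∧ 1 ≤ idealCount K p} with hT
  refine ⟨(d : ℝ)⁻¹ * C + 3 * D, ?_⟩
  filter_upwards [hC] with s ⟨hs, hsum, hpos, _, hge⟩
  suffices hmain : realZeta K s ≤ Real.exp (d * (primeSum T s + 3 * D)) by
    have h1 := Real.log_le_log hpos hmain
    rw [Real.log_exp] at h1
    have h2 : (d : ℝ)⁻¹ * (-Real.log (s - 1) - C) ≤ primeSum T s + 3 * D := by
      rw [inv_mul_le_iff₀ hd0]
      linarith
    linarith
  refine Real.tsum_le_of_sum_range_le (fun n => by positivity) fun X => ?_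
  have hfin : {I : Ideal (𝓞 K) | Ideal.absNorm I < X}.Finite :=
    (Ideal.finite_setOfPred_absNorm_le (S := 𝓞 K) X).subset fun I hI => by
      simp only [Set.mem_ofPred_eq] at hI ⊢
      exact hI.le
  set 𝓘 : Finset (Ideal (𝓞 K)) := hfin.toFinset.filter (· ≠ ⊥) with h𝓘
  set G : Finset (Ideal (𝓞 K)) := hfin.toFinset.filter (Prime ·) with hG
  have mem𝓘 : ∀ I, I ∈ 𝓘 ↔ Ideal.absNorm I < X ∧ I ≠ ⊥ := fun I => by simp [h𝓘]
  have memG : ∀ I, I ∈ G ↔ Ideal.absNorm I < X ∧ Prime I := fun I => by simp [hG]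
  have h1 : ∑ n ∈ Finset.range X, (idealCount K n : ℝ) * (n : ℝ) ^ (-s) =
      ∑ I ∈ 𝓘, (Ideal.absNorm I : ℝ) ^ (-s) := by
    rw [← Finset.sum_fiberwise_of_maps_to (t := Finset.range X) (g := fun I => Ideal.absNorm I)
      (fun I hI => Finset.mem_range.mpr ((mem𝓘 I).mp hI).1)]
    refine Finset.sum_congr rfl fun n hn => ?_
    rw [Finset.sum_congr rfl (g := fun _ => (n : ℝ) ^ (-s))
      (fun I hI => by rw [(Finset.mem_filter.mp hI).2]), Finset.sum_const, nsmul_eq_mul]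
    rcases Nat.eq_zero_or_pos n with rfl | hn0
    · simp [Real.zero_rpow (show -s ≠ 0 by linarith)]
    congr 2
    rw [idealCount, ← Set.coe_ofPred, Nat.card_coe_set_eq, ← Set.ncard_coe_finset]
    congr 1
    ext I
    simp only [Finset.coe_filter, Set.mem_ofPred_eq, mem𝓘]
    refine ⟨fun h => ⟨⟨h ▸ Finset.mem_range.mp hn, ?_⟩, h⟩, fun h => h.2⟩
    rintro rfl
    simp at h
    omega
  have hw : ∀ I ∈ G, (Ideal.absNorm I : ℝ) ^ (-s) ≤ 1 / 2 := by
    intro I hI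
    obtain ⟨p, k, hp, hk, h, _⟩ := exists_absNorm_eq_prime_pow ((memG I).mp hI).2
    have h2 : 2 ≤ Ideal.absNorm I := h ▸ hp.two_le.trans (Nat.le_self_pow (by omega) p)
    have h2' : (2 : ℝ) ≤ Ideal.absNorm I := by exact_mod_cast h2
    have h3 : (Ideal.absNorm I : ℝ) ^ (-s) ≤ (Ideal.absNorm I : ℝ) ^ (-1 : ℝ) :=
      Real.rpow_le_rpow_of_exponent_le (by linarith) (by linarith)
    refine h3.trans ?_
    rw [Real.rpow_neg_one, one_div]
    exact inv_anti₀ (by norm_num) h2'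
  rw [h1]
  refine (sum_absNorm_rpow_le_prod 𝓘 G ?_
    (fun I hI => (hw I hI).trans_lt (by norm_num))).trans ?_
  · intro I hI
    obtain ⟨hI1, hI2⟩ := (mem𝓘 I).mp hI
    refine ⟨hI2, fun P hP => (memG P).mpr ⟨?_,
      UniqueFactorizationMonoid.prime_of_normalized_factor P hP⟩⟩
    refine lt_of_le_of_lt (Nat.le_of_dvd ?_ ?_) hI1
    · rw [Nat.pos_iff_ne_zero, Ne, Ideal.absNorm_eq_zero_iff]
      exact hI2
    · exact Ideal.absNorm_dvd_absNorm_of_le (Ideal.le_of_dvd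
        (UniqueFactorizationMonoid.dvd_of_mem_normalizedFactors hP))
  refine (Finset.prod_le_prod (fun I hI => inv_nonneg.mpr (by linarith [hw I hI]))
    fun I hI => inv_one_sub_le_exp (hw I hI)).trans ?_
  rw [← Real.exp_sum, Real.exp_le_exp]
  -- group the prime ideals by residue characteristic
  have hchar : ∀ I ∈ G, ((Ideal.absNorm I).minFac).Prime ∧
      (((Ideal.absNorm I).minFac : ℕ) : 𝓞 K) ∈ I ∧ (Ideal.absNorm I).minFac < X ∧
      (Ideal.absNorm I : ℝ) ^ (-s) + 2 * ((Ideal.absNorm I : ℝ) ^ (-s)) ^ 2 ≤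
        T.indicator (fun p : ℕ => (p : ℝ) ^ (-s)) (Ideal.absNorm I).minFac +
          3 * (((Ideal.absNorm I).minFac : ℝ) ^ 2)⁻¹ := by
    intro I hI
    obtain ⟨p, k, hp, hk, h, hpI⟩ := exists_absNorm_eq_prime_pow ((memG I).mp hI).2
    have hmin : (Ideal.absNorm I).minFac = p := by rw [h]; exact hp.pow_minFac (by omega)
    have hle : p ≤ Ideal.absNorm I := h ▸ Nat.le_self_pow (by omega) p
    rw [hmin]
    refine ⟨hp, hpI, hle.trans_lt ((memG I).mp hI).1, ?_⟩
    have hp1 : (1 : ℝ) ≤ p := by exact_mod_cast hp.one_lt.le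
    have hTn : 0 ≤ T.indicator (fun p : ℕ => (p : ℝ) ^ (-s)) p :=
      Set.indicator_nonneg (fun _ _ => by positivity) _
    have hq : ((Ideal.absNorm I : ℝ) ^ (-s)) ^ 2 ≤ ((p : ℝ) ^ 2)⁻¹ := by
      refine (rpow_neg_sq_le (hp.one_lt.le.trans hle) hs).trans ?_
      gcongr
    rcases Nat.lt_or_ge 1 k with hk2 | hk1
    · have : (Ideal.absNorm I : ℝ) ^ (-s) ≤ ((p : ℝ) ^ 2)⁻¹ := by
        have h2 : p ^ 2 ≤ Ideal.absNorm I := h ▸ Nat.pow_le_pow_right hp.pos hk2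
        have h2' : (p : ℝ) ^ 2 ≤ Ideal.absNorm I := by exact_mod_cast h2
        have h3 : (1 : ℝ) ≤ Ideal.absNorm I := by nlinarith
        calc (Ideal.absNorm I : ℝ) ^ (-s) ≤ (Ideal.absNorm I : ℝ) ^ (-1 : ℝ) :=
              Real.rpow_le_rpow_of_exponent_le h3 (by linarith)
          _ = (Ideal.absNorm I : ℝ)⁻¹ := Real.rpow_neg_one _
          _ ≤ _ := inv_anti₀ (by positivity) h2'
      linarith
    · have hk' : k = 1 := by omega
      rw [hk', pow_one] at h
      have hpT : p ∈ T := by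
        refine ⟨hp, ?_⟩
        have : Nonempty {I : Ideal (𝓞 K) // Ideal.absNorm I = p} := ⟨⟨I, h⟩⟩
        exact Nat.card_pos
      rw [Set.indicator_of_mem hpT, h] at *
      have : (0 : ℝ) ≤ ((p : ℝ) ^ 2)⁻¹ := by positivity
      linarith
  rw [← Finset.sum_fiberwise_of_maps_to (t := Finset.range X)
    (g := fun I => (Ideal.absNorm I).minFac)
    (fun I hI => Finset.mem_range.mpr (hchar I hI).2.2.1)]
  have h2 : ∀ p ∈ Finset.range X, ∑ I ∈ G.filter (fun I => (Ideal.absNorm I).minFac = p),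
      ((Ideal.absNorm I : ℝ) ^ (-s) + 2 * ((Ideal.absNorm I : ℝ) ^ (-s)) ^ 2) ≤
      d * (T.indicator (fun p : ℕ => (p : ℝ) ^ (-s)) p + 3 * ((p : ℝ) ^ 2)⁻¹) := by
    intro p _
    have hn : 0 ≤ T.indicator (fun p : ℕ => (p : ℝ) ^ (-s)) p + 3 * ((p : ℝ) ^ 2)⁻¹ :=
      add_nonneg (Set.indicator_nonneg (fun _ _ => by positivity) _) (by positivity)
    have hcard : ((G.filter (fun I => (Ideal.absNorm I).minFac = p)).card : ℝ) ≤ d := by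
      by_cases hp : p.Prime
      · exact_mod_cast card_primes_above_le p hp _ fun I hI => by
          obtain ⟨hI1, hI2⟩ := Finset.mem_filter.mp hI
          exact ⟨((memG I).mp hI1).2, hI2 ▸ (hchar I hI1).2.1⟩
      · rw [Finset.filter_eq_empty_iff.mpr fun I hI (h : (Ideal.absNorm I).minFac = p) =>
          hp (h ▸ (hchar I hI).1)]
        simp
    refine le_trans (Finset.sum_le_card_nsmul _ _
      (T.indicator (fun p : ℕ => (p : ℝ) ^ (-s)) p + 3 * ((p : ℝ) ^ 2)⁻¹) fun I hI => ?_) ?_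
    · obtain ⟨hI1, hI2⟩ := Finset.mem_filter.mp hI
      rw [← hI2]
      exact (hchar I hI1).2.2.2
    · rw [nsmul_eq_mul]
      gcongr
  refine (Finset.sum_le_sum h2).trans ?_
  rw [← Finset.mul_sum, Finset.sum_add_distrib, ← Finset.mul_sum]
  gcongr
  · exact (summable_indicator_rpow T hs).sum_le_tsum _
      fun _ _ => Set.indicator_nonneg (fun _ _ => by positivity) _
  · exact hsq.sum_le_tsum _ fun _ _ => by positivity

end DedekindZeta

/-! ### Roots modulo primes and ideals of prime norm -/

section KummerDedekind

open NumberField RingOfIntegers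

variable {K : Type*} [Field K] [NumberField K]

/-- `ℤ[θ]` has finite index in `𝓞 K`: the discriminant of the power basis lies in the conductor. -/
lemma exponent_ne_zero (B : PowerBasis ℚ K) {θ : 𝓞 K} (hθ : (θ : K) = B.gen) :
    exponent θ ≠ 0 := by
  have hgen : IsIntegral ℤ B.gen := hθ ▸ θ.isIntegral_coe
  have hd : IsIntegral ℤ (Algebra.discr ℚ B.basis) :=
    Algebra.discr_isIntegral ℚ fun i => by
      rw [PowerBasis.basis_eq_pow]; exact hgen.pow _
  obtain ⟨D, hD⟩ := IsIntegrallyClosed.isIntegral_iff.mp hd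
  have hD0 : D ≠ 0 := by
    rintro rfl
    exact Algebra.discr_not_zero_of_basis ℚ B.basis (by rw [← hD]; simp)
  have hmem : (D : 𝓞 K) ∈ conductor ℤ θ := by
    rw [mem_conductor_iff]
    intro b
    have h1 := Algebra.discr_mul_isIntegral_mem_adjoin (R := ℤ) ℚ hgen b.isIntegral_coe
    have h2 : Algebra.adjoin ℤ {B.gen} =
        (Algebra.adjoin ℤ {θ}).map (IsScalarTower.toAlgHom ℤ (𝓞 K) K) := by
      rw [AlgHom.map_adjoin]
      simp [← hθ]
    rw [h2, Subalgebra.mem_map] at h1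
    obtain ⟨c, hc, hc'⟩ := h1
    have : (D : 𝓞 K) * b = c := by
      apply RingOfIntegers.coe_injective
      rw [← hD, Algebra.smul_def] at hc'
      simpa using hc'.symm
    rwa [this]
  intro h0
  rw [exponent, Ideal.absNorm_eq_zero_iff] at h0
  have : D ∈ Ideal.under ℤ (conductor ℤ θ) := by
    rw [Ideal.under_def, Ideal.mem_comap]; simpa using hmem
  rw [h0] at this
  exact hD0 (by simpa using this)

/-- Away from the conductor, distinct roots modulo `p` of the minimal polynomial of `θ` give
distinct ideals of norm `p`. -/
lemma card_roots_le_idealCount {θ : 𝓞 K} {p : ℕ} [hp : Fact p.Prime] (hpe : ¬ p ∣ exponent θ)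
    (A : Finset (ZMod p))
    (hA : ∀ a ∈ A, ((minpoly ℤ θ).map (Int.castRingHom (ZMod p))).IsRoot a) :
    A.card ≤ idealCount K p := by
  have hne : (minpoly ℤ θ).map (Int.castRingHom (ZMod p)) ≠ 0 :=
    ((minpoly.monic θ.isIntegral).map _).ne_zero
  have hmem : ∀ a ∈ A, (X - C a : (ZMod p)[X]) ∈ monicFactorsMod θ p := by
    intro a ha
    rw [Multiset.mem_toFinset, UniqueFactorizationMonoid.mem_normalizedFactors_iff']
    · exact ⟨irreducible_X_sub_C a, (monic_X_sub_C a).normalize_eq_self,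
        dvd_iff_isRoot.mpr (hA a ha)⟩
    · exact hne
  let e := Ideal.primesOverSpanEquivMonicFactorsMod hpe
  let g : A → {I : Ideal (𝓞 K) // Ideal.absNorm I = p} := fun a =>
    ⟨(e.symm ⟨X - C (a : ZMod p), hmem a a.2⟩ : Ideal (𝓞 K)), by
      set Q := e.symm ⟨X - C (a : ZMod p), hmem a a.2⟩ with hQ
      have h1 := Ideal.inertiaDeg_primesOverSpanEquivMonicFactorsMod_symm_apply' hpe (hmem a a.2)
      have hlo : (Q : Ideal (𝓞 K)).LiesOver (Ideal.span {(p : ℤ)}) := Q.2.2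
      have hpr : (Q : Ideal (𝓞 K)).IsPrime := Q.2.1
      have hmax : (Ideal.span {(p : ℤ)}).IsMaximal := Int.ideal_span_isMaximal_of_prime p
      have hmax' : (Q : Ideal (𝓞 K)).IsMaximal :=
        Ideal.IsMaximal.of_liesOver_isMaximal _ (Ideal.span {(p : ℤ)})
      rw [Ideal.absNorm_eq_pow_inertiaDeg' (p := p) (Q : Ideal (𝓞 K)) hp.out,
        Ideal.inertiaDeg'_eq_inertiaDeg, h1, natDegree_X_sub_C, pow_one]⟩
  have hg : Function.Injective g := by
    intro a b hab
    have h1 : (g a : Ideal (𝓞 K)) = g b := by rw [hab]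
    have h2 := e.symm.injective (Subtype.ext h1)
    have h3 : (X - C (a : ZMod p)) = X - C (b : ZMod p) := congrArg Subtype.val h2
    exact Subtype.ext (C_injective (sub_right_injective h3))
  have := Nat.card_le_card_of_injective g hg
  simpa [idealCount] using this

/-- A polynomial with two distinct roots in `𝓞 K` has two distinct roots modulo almost every
prime `p` that is the norm of an ideal. -/
lemma exists_two_roots_mod {f : ℤ[X]} {θ₁ θ₂ : 𝓞 K} (h₁ : aeval θ₁ f = 0)
    (h₂ : aeval θ₂ f = 0) {p : ℕ} [hp : Fact p.Prime] (hcount : 1 ≤ idealCount K p)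
    (hdvd : ¬ p ∣ Ideal.absNorm (Ideal.span {θ₁ - θ₂})) :
    ∃ a b : ZMod p, a ≠ b ∧ (f.map (Int.castRingHom (ZMod p))).IsRoot a ∧
      (f.map (Int.castRingHom (ZMod p))).IsRoot b := by
  have hne : Nonempty {I : Ideal (𝓞 K) // Ideal.absNorm I = p} := by
    by_contra hcon
    rw [not_nonempty_iff] at hcon
    simp [idealCount] at hcount
  obtain ⟨I, hI⟩ := hne
  have hcard : Nat.card (𝓞 K ⧸ I) = p := by
    rw [← hI, Ideal.absNorm_apply, Submodule.cardQuot_apply]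
  have : Finite (𝓞 K ⧸ I) := Nat.finite_of_card_ne_zero (by rw [hcard]; exact hp.out.ne_zero)
  have : Fintype (𝓞 K ⧸ I) := Fintype.ofFinite _
  let e : ZMod p ≃+* 𝓞 K ⧸ I :=
    ZMod.ringEquivOfPrime _ hp.out (by rw [← Nat.card_eq_fintype_card, hcard])
  let φ : 𝓞 K →+* ZMod p := (e.symm : (𝓞 K ⧸ I) →+* ZMod p).comp (Ideal.Quotient.mk I)
  have hroot : ∀ θ : 𝓞 K, aeval θ f = 0 → (f.map (Int.castRingHom (ZMod p))).IsRoot (φ θ) := by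
    intro θ hθ
    rw [IsRoot.def, eval_map]
    have h : φ (aeval θ f) = 0 := by rw [hθ, map_zero]
    rw [aeval_def, hom_eval₂] at h
    rwa [RingHom.ext_int (φ.comp (algebraMap ℤ (𝓞 K))) (Int.castRingHom (ZMod p))] at h
  refine ⟨φ θ₁, φ θ₂, fun hab => hdvd ?_, hroot _ h₁, hroot _ h₂⟩
  have hz : φ (θ₁ - θ₂) = 0 := by rw [map_sub, hab, sub_self]
  have hmem : θ₁ - θ₂ ∈ I := by
    rw [← Ideal.Quotient.eq_zero_iff_mem]
    exact e.symm.injective (by simpa [φ] using hz)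
  rw [← hI]
  exact Ideal.absNorm_dvd_absNorm_of_le ((Ideal.span_singleton_le_iff_mem I).mpr hmem)

end KummerDedekind

/-! ### Density of the primes without roots -/

section PrimesWithoutRoots

open NumberField Topology

lemma primeSum_le_add {A B D : Set ℕ} (h : A ⊆ B ∪ D) {s : ℝ} (hs : 1 < s) :
    primeSum A s ≤ primeSum B s + primeSum D s := by
  unfold primeSum
  rw [← (summable_indicator_rpow B hs).tsum_add (summable_indicator_rpow D hs)]
  refine (summable_indicator_rpow A hs).tsum_le_tsum (fun p => ?_)
    ((summable_indicator_rpow B hs).add (summable_indicator_rpow D hs))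
  have hB : 0 ≤ B.indicator (fun p : ℕ => (p : ℝ) ^ (-s)) p :=
    Set.indicator_nonneg (fun _ _ => by positivity) _
  have hD : 0 ≤ D.indicator (fun p : ℕ => (p : ℝ) ^ (-s)) p :=
    Set.indicator_nonneg (fun _ _ => by positivity) _
  by_cases hp : p ∈ A
  · rw [Set.indicator_of_mem hp]
    rcases h hp with h1 | h1
    · rw [Set.indicator_of_mem h1]; linarith
    · rw [Set.indicator_of_mem h1]; linarith
  · rw [Set.indicator_of_notMem hp]; linarith

lemma primeSum_finset_le (F : Finset ℕ) {s : ℝ} (hs : 1 < s) : primeSum F s ≤ F.card := by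
  unfold primeSum
  rw [tsum_eq_sum (s := F) (fun p hp => Set.indicator_of_notMem (by simpa using hp) _)]
  refine (Finset.sum_le_card_nsmul _ _ 1 fun p _ => ?_).trans (by simp)
  refine Set.indicator_apply_le' (fun _ => ?_) fun _ => zero_le_one
  rcases Nat.eq_zero_or_pos p with rfl | hp
  · rw [Nat.cast_zero, Real.zero_rpow (by linarith)]; exact zero_le_one
  · exact Real.rpow_le_one_of_one_le_of_nonpos (by exact_mod_cast hp) (by linarith)

/-- The primes modulo which `f` has no root. -/
def noRootPrimes (f : ℤ[X]) : Set ℕ :=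
  {p | p.Prime ∧ ∀ a : ZMod p, ¬ (f.map (Int.castRingHom (ZMod p))).IsRoot a}

lemma le_primeSum_primes : ∃ C : ℝ, ∀ᶠ s : ℝ in 𝓝[>] 1,
    -Real.log (s - 1) - C ≤ primeSum {p | p.Prime} s := by
  obtain ⟨C, hC⟩ := le_primeSum_idealCount ℚ
  refine ⟨C, ?_⟩
  filter_upwards [hC, self_mem_nhdsWithin] with s hs hs1
  rw [Module.finrank_self, Nat.cast_one, inv_one, one_mul] at hs
  refine hs.trans ((primeSum_le_add (D := (∅ : Finset ℕ)) (B := {p | p.Prime})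
    (fun p hp => Or.inl hp.1) hs1).trans ?_)
  have := primeSum_finset_le ∅ hs1
  simp only [Finset.card_empty, Nat.cast_zero] at this
  linarith

/-- The primes without a root of `f` have positive lower (Dirichlet) density. Here `K = ℚ(θ)` is
the root field of `f` and `L` is a number field containing two roots of `f`. Let `R₁`, `R₂` be the
sets of primes with at least one, respectively two, ideals of norm `p` in `K`. Up to finitely many
exceptions every prime lies in `R₁` or has no root of `f`; the densities of `R₁` and `R₂` add up to
at most `1`, while `R₂` contains almost all primes with an ideal of norm `p` in `L`, whose density
is at least `1 / [L : ℚ]`. -/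
lemma le_primeSum_noRootPrimes_aux (K L : Type*) [Field K] [NumberField K] [Field L]
    [NumberField L] {f : ℤ[X]} (hf : f.Monic) (B : PowerBasis ℚ K)
    (hB : minpoly ℚ B.gen = f.map (Int.castRingHom ℚ)) {x y : L} (hxy : x ≠ y)
    (hx : aeval x f = 0) (hy : aeval y f = 0) :
    ∃ δ : ℝ, 0 < δ ∧ ∃ C : ℝ, ∀ᶠ s : ℝ in 𝓝[>] 1,
      δ * (-Real.log (s - 1)) - C ≤ primeSum (noRootPrimes f) s := by
  classical
  have hgen : IsIntegral ℤ B.gen := by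
    refine ⟨f, hf, ?_⟩
    rw [← aeval_def, ← aeval_map_algebraMap ℚ, algebraMap_int_eq, ← hB, minpoly.aeval]
  let θ : 𝓞 K := ⟨B.gen, hgen⟩
  have hexp : RingOfIntegers.exponent θ ≠ 0 := exponent_ne_zero B rfl
  have hmin : minpoly ℤ θ = f := by
    have h1 := minpoly.isIntegrallyClosed_eq_field_fractions ℚ K θ.isIntegral
    have h3 : f.map (algebraMap ℤ ℚ) = (minpoly ℤ θ).map (algebraMap ℤ ℚ) := hB.symm.trans h1
    exact map_injective _ (algebraMap ℤ ℚ).injective_int h3.symm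
  let θ₁ : 𝓞 L := ⟨x, ⟨f, hf, hx⟩⟩
  let θ₂ : 𝓞 L := ⟨y, ⟨f, hf, hy⟩⟩
  have hθ₁ : aeval θ₁ f = 0 := RingOfIntegers.coe_injective (by
    rw [map_zero, ← aeval_algebraMap_apply]; exact hx)
  have hθ₂ : aeval θ₂ f = 0 := RingOfIntegers.coe_injective (by
    rw [map_zero, ← aeval_algebraMap_apply]; exact hy)
  set D := Ideal.absNorm (Ideal.span {θ₁ - θ₂}) with hD
  have hD0 : D ≠ 0 := by
    rw [hD, Ne, Ideal.absNorm_eq_zero_iff, Ideal.span_singleton_eq_bot, sub_eq_zero]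
    exact fun h => hxy (congrArg (fun z : 𝓞 L => (z : L)) h)
  -- the exceptional primes
  set F : Finset ℕ := (RingOfIntegers.exponent θ).primeFactors ∪ D.primeFactors with hF
  set R₁ : Set ℕ := {p | p.Prime ∧ 1 ≤ idealCount K p} with hR₁
  set R₂ : Set ℕ := {p | p.Prime ∧ 2 ≤ idealCount K p} with hR₂
  set T : Set ℕ := {p | p.Prime ∧ 1 ≤ idealCount L p} with hT
  have hFe : ∀ p : ℕ, p.Prime → p ∉ F → ¬ p ∣ RingOfIntegers.exponent θ := fun p hp hpF h =>
    hpF (Finset.mem_union_left _ (Nat.mem_primeFactors.mpr ⟨hp, h, hexp⟩))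
  have hFD : ∀ p : ℕ, p.Prime → p ∉ F → ¬ p ∣ D := fun p hp hpF h =>
    hpF (Finset.mem_union_right _ (Nat.mem_primeFactors.mpr ⟨hp, h, hD0⟩))
  have hcov : {p : ℕ | p.Prime} ⊆ (noRootPrimes f ∪ R₁) ∪ F := by
    intro p (hp : p.Prime)
    by_cases hpF : p ∈ F
    · exact Or.inr hpF
    left
    have : Fact p.Prime := ⟨hp⟩
    by_cases hroot : ∃ a : ZMod p, (f.map (Int.castRingHom (ZMod p))).IsRoot a
    · obtain ⟨a, ha⟩ := hroot
      refine Or.inr ⟨hp, ?_⟩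
      simpa using card_roots_le_idealCount (hFe p hp hpF) {a} (by simpa [hmin] using ha)
    · exact Or.inl ⟨hp, not_exists.mp hroot⟩
  have hTR : T ⊆ R₂ ∪ F := by
    rintro p ⟨hp, hpT⟩
    by_cases hpF : p ∈ F
    · exact Or.inr hpF
    left
    have : Fact p.Prime := ⟨hp⟩
    obtain ⟨a, b, hab, ha, hb⟩ := exists_two_roots_mod hθ₁ hθ₂ hpT (hFD p hp hpF)
    refine ⟨hp, ?_⟩
    have := card_roots_le_idealCount (hFe p hp hpF) {a, b} (by
      intro c hc
      rw [hmin]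
      rcases Finset.mem_insert.mp hc with rfl | hc
      · exact ha
      · rw [Finset.mem_singleton.mp hc]; exact hb)
    rwa [Finset.card_pair hab] at this
  obtain ⟨C₁, h₁⟩ := le_primeSum_primes
  obtain ⟨C₂, h₂⟩ := le_primeSum_idealCount L
  obtain ⟨C₃, h₃⟩ := primeSum_idealCount_le K
  refine ⟨(Module.finrank ℚ L : ℝ)⁻¹, inv_pos.mpr (by exact_mod_cast Module.finrank_pos),
    C₁ + C₂ + C₃ + 2 * F.card, ?_⟩
  filter_upwards [h₁, h₂, h₃, self_mem_nhdsWithin] with s h₁ h₂ h₃ (hs : 1 < s)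
  have e₁ := primeSum_le_add hcov hs
  have e₂ := primeSum_le_add (Set.Subset.refl (noRootPrimes f ∪ R₁)) hs
  have e₃ := primeSum_le_add hTR hs
  have e₄ := primeSum_finset_le F hs
  linarith

lemma le_primeSum_noRootPrimes_of_monic {f : ℤ[X]} (hf : f.Monic)
    (hirr : Irreducible (f.map (Int.castRingHom ℚ))) (hdeg : 2 ≤ f.natDegree) :
    ∃ δ : ℝ, 0 < δ ∧ ∃ C : ℝ, ∀ᶠ s : ℝ in 𝓝[>] 1,
      δ * (-Real.log (s - 1)) - C ≤ primeSum (noRootPrimes f) s := by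
  set g : ℚ[X] := f.map (Int.castRingHom ℚ) with hg
  have hgm : g.Monic := hf.map _
  have : Fact (Irreducible g) := ⟨hirr⟩
  have : FiniteDimensional ℚ (AdjoinRoot g) := (AdjoinRoot.powerBasis hirr.ne_zero).finite
  have hK : NumberField (AdjoinRoot g) := ⟨⟩
  have hL : NumberField (SplittingField g) := ⟨⟩
  have haeval : ∀ {R : Type} [Field R] [CharZero R] (x : R), aeval x g = 0 → aeval x f = 0 := by
    intro R _ _ x hx
    rwa [hg, ← algebraMap_int_eq, aeval_map_algebraMap] at hx
  have hcard : 1 < g.natDegree := by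
    rw [hg, natDegree_map_eq_of_injective (Int.castRingHom ℚ).injective_int]; omega
  rw [← card_rootSet_eq_natDegree hirr.separable (SplittingField.splits g)] at hcard
  obtain ⟨x, y, hxy⟩ := Fintype.one_lt_card_iff.mp hcard
  have hmin := AdjoinRoot.minpoly_root hirr.ne_zero
  rw [hgm.leadingCoeff, inv_one, map_one, mul_one] at hmin
  exact le_primeSum_noRootPrimes_aux (AdjoinRoot g) (SplittingField g) hf
    (AdjoinRoot.powerBasis hirr.ne_zero) hmin (fun h => hxy (Subtype.ext h))
    (haeval _ (aeval_eq_zero_of_mem_rootSet x.2)) (haeval _ (aeval_eq_zero_of_mem_rootSet y.2))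

end PrimesWithoutRoots

/-! ### Twists with rational points -/

section Twists

open Topology

/-- The primes `p` modulo which `P` has no root in the projective line: `P` has no root modulo `p`
and `p` does not divide the leading coefficient. -/
def goodPrimes (P : ℤ[X]) : Set ℕ := {p | p ∈ noRootPrimes P ∧ ¬ (p : ℤ) ∣ P.leadingCoeff}

/-- The scaling `Q(X) = c ^ (N - 1) P(X / c)`, `c` the leading coefficient of `P`, makes `P` monic
and does not affect the existence of roots modulo primes not dividing `c`. -/
lemma le_primeSum_goodPrimes_of_irreducible {P : ℤ[X]}
    (hirr : Irreducible (P.map (Int.castRingHom ℚ))) (hdeg : 2 ≤ P.natDegree) :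
    ∃ δ : ℝ, 0 < δ ∧ ∃ C : ℝ, ∀ᶠ s : ℝ in 𝓝[>] 1,
      δ * (-Real.log (s - 1)) - C ≤ primeSum (goodPrimes P) s := by
  have hP0 : P ≠ 0 := by rintro rfl; simp at hdeg
  have hc0 : P.leadingCoeff ≠ 0 := leadingCoeff_ne_zero.mpr hP0
  set c := P.leadingCoeff with hc
  have hcQ : (c : ℚ) ≠ 0 := by exact_mod_cast hc0
  have hirr' : Irreducible (P.integralNormalization.map (Int.castRingHom ℚ)) := by
    let : Invertible (c : ℚ) := invertibleOfNonzero hcQ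
    have h1 := integralNormalization_eval₂_leadingCoeff_mul (p := P) (by omega)
      ((C : ℚ →+* ℚ[X]).comp (Int.castRingHom ℚ)) X
    have h2 : algEquivCMulXAddC (c : ℚ) 0 (P.integralNormalization.map (Int.castRingHom ℚ)) =
        C ((c : ℚ) ^ (P.natDegree - 1)) * P.map (Int.castRingHom ℚ) := by
      simp only [algEquivCMulXAddC_apply, map_zero, add_zero]
      rw [aeval_def, eval₂_map, algebraMap_eq]
      have h3 : eval₂ ((C : ℚ →+* ℚ[X]).comp (Int.castRingHom ℚ)) X P =
          P.map (Int.castRingHom ℚ) := rfl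
      rw [h3] at h1
      simpa using h1
    rw [← MulEquiv.irreducible_iff (algEquivCMulXAddC (c : ℚ) 0), h2]
    exact (irreducible_isUnit_mul (isUnit_C.mpr (pow_ne_zero _ hcQ).isUnit)).mpr hirr
  obtain ⟨δ, hδ, C, hC⟩ := le_primeSum_noRootPrimes_of_monic (monic_integralNormalization hP0)
    hirr' (by rwa [natDegree_integralNormalization])
  refine ⟨δ, hδ, C + c.natAbs.primeFactors.card, ?_⟩
  filter_upwards [hC, self_mem_nhdsWithin] with s h (hs : 1 < s)
  have hsub : noRootPrimes P.integralNormalization ⊆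
      goodPrimes P ∪ (c.natAbs.primeFactors : Finset ℕ) := by
    rintro p ⟨hp, hroot⟩
    by_cases hpc : (p : ℤ) ∣ c
    · right
      exact Nat.mem_primeFactors.mpr ⟨hp, Int.natCast_dvd.mp hpc, Int.natAbs_ne_zero.mpr hc0⟩
    · refine Or.inl ⟨⟨hp, fun a ha => ?_⟩, hpc⟩
      apply hroot (Int.castRingHom (ZMod p) c * a)
      rw [IsRoot.def, eval_map] at ha ⊢
      rw [hc, integralNormalization_eval₂_leadingCoeff_mul (by omega), ha, mul_zero]
  have h1 := primeSum_le_add hsub hs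
  have h2 := primeSum_finset_le c.natAbs.primeFactors hs
  linarith

lemma le_primeSum_goodPrimes_of_natDegree_eq_zero {P : ℤ[X]} (hP : P ≠ 0)
    (hdeg : P.natDegree = 0) : ∃ δ : ℝ, 0 < δ ∧ ∃ C : ℝ, ∀ᶠ s : ℝ in 𝓝[>] 1,
      δ * (-Real.log (s - 1)) - C ≤ primeSum (goodPrimes P) s := by
  obtain ⟨c, rfl⟩ := natDegree_eq_zero.mp hdeg
  have hc0 : c ≠ 0 := by simpa using hP
  obtain ⟨D, hD⟩ := le_primeSum_primes
  refine ⟨1, one_pos, D + c.natAbs.primeFactors.card, ?_⟩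
  filter_upwards [hD, self_mem_nhdsWithin] with s h (hs : 1 < s)
  have hsub : {p : ℕ | p.Prime} ⊆ goodPrimes (C c) ∪ (c.natAbs.primeFactors : Finset ℕ) := by
    intro p (hp : p.Prime)
    by_cases hpc : (p : ℤ) ∣ c
    · right
      exact Nat.mem_primeFactors.mpr ⟨hp, Int.natCast_dvd.mp hpc, Int.natAbs_ne_zero.mpr hc0⟩
    · refine Or.inl ⟨⟨hp, fun a ha => hpc ?_⟩, by rwa [leadingCoeff_C]⟩
      rw [map_C, IsRoot.def, eval_C] at ha
      exact (ZMod.intCast_zmod_eq_zero_iff_dvd c p).mp (by simpa using ha)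
  have h1 := primeSum_le_add hsub hs
  have h2 := primeSum_finset_le c.natAbs.primeFactors hs
  linarith

/-- If `d F` is an `n`-th power and `p` does not divide `F`, then the exponent of `p` in `d` is a
multiple of `n`, hence `0` as `d` is `n`-free. -/
lemma not_dvd_of_pow_eq {n : ℕ} (hn : n ≠ 0) {d : ℤ} (hd : NFree n d) {z : ℚ} {F : ℤ}
    (hz : z ^ n = d * F) {p : ℕ} (hp : p.Prime) (hF : ¬ (p : ℤ) ∣ F) : ¬ (p : ℤ) ∣ d := by
  intro hpd
  have hp' : Prime (p : ℤ) := Nat.prime_iff_prime_int.mp hp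
  obtain ⟨w, rfl⟩ := IsIntegrallyClosed.exists_algebraMap_eq_of_isIntegral_pow (R := ℤ)
    (Nat.pos_of_ne_zero hn) (show IsIntegral ℤ (z ^ n) by
      rw [hz, ← Int.cast_mul]; exact isIntegral_algebraMap (R := ℤ) (A := ℚ))
  have hw : w ^ n = d * F := by
    have : ((w ^ n : ℤ) : ℚ) = ((d * F : ℤ) : ℚ) := by push_cast; simpa using hz
    exact_mod_cast this
  have hpw : (p : ℤ) ∣ w := hp'.dvd_of_dvd_pow (hw ▸ hpd.mul_right F)
  have hpow : (p : ℤ) ^ n ∣ d * F := hw ▸ pow_dvd_pow_of_dvd hpw n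
  exact hd.2.2 p hp (((hp'.coprime_iff_not_dvd.mpr hF).pow_left).dvd_of_dvd_mul_right hpow)

/-- The binary form attached to `P` takes values prime to `p` at coprime arguments. -/
lemma not_dvd_eval_scaleRoots {P : ℤ[X]} {p : ℕ} (hp : p ∈ goodPrimes P) {a b : ℤ}
    (hab : IsCoprime a b) : ¬ (p : ℤ) ∣ (P.scaleRoots b).eval a := by
  obtain ⟨⟨hpp, hroot⟩, hlc⟩ := hp
  have : Fact p.Prime := ⟨hpp⟩
  have hlc' : Int.castRingHom (ZMod p) P.leadingCoeff ≠ 0 := by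
    simpa [ZMod.intCast_zmod_eq_zero_iff_dvd] using hlc
  intro h
  rw [← ZMod.intCast_zmod_eq_zero_iff_dvd, ← eq_intCast (Int.castRingHom (ZMod p)),
    ← eval₂_at_apply] at h
  set f := Int.castRingHom (ZMod p) with hf
  by_cases hb : f b = 0
  · rw [← eval_map, map_scaleRoots _ _ _ hlc', hb, scaleRoots_zero] at h
    have ha : f a = 0 := by
      rw [eval_smul, smul_eq_mul, eval_pow, eval_X, leadingCoeff_map_of_leadingCoeff_ne_zero _ hlc']
        at h
      exact eq_zero_of_pow_eq_zero ((mul_eq_zero.mp h).resolve_left hlc')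
    obtain ⟨u, v, huv⟩ := hab
    have := congrArg f huv
    rw [map_add, map_mul, map_mul, ha, hb, map_one] at this
    simp at this
  · have h1 : f a = f b * (f a / f b) := by field_simp
    rw [h1, scaleRoots_eval₂_mul] at h
    have h2 := (mul_eq_zero.mp h).resolve_left (pow_ne_zero _ hb)
    exact hroot (f a / f b) (by rw [IsRoot.def, eval_map]; exact h2)

/-- The obstruction: a prime modulo which `P` has no projective root cannot divide an `n`-free
twist `d` with a nontrivial rational point, since the exponent of `p` in `d` would be a positive multiple of `n`. -/
lemma not_dvd_of_hasNontrivialPoint {n N : ℕ} (hn : n ≠ 0) (hdvd : n ∣ N) {P : ℤ[X]}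
    (hdeg : P.natDegree = N) {d : ℤ} (hd : NFree n d) (h : HasNontrivialPoint n N P d) {p : ℕ}
    (hp : p ∈ goodPrimes P) : ¬ (p : ℤ) ∣ d := by
  rcases h with ⟨t, y, -, hy⟩ | ⟨-, y, -, hy⟩
  · obtain ⟨m, rfl⟩ := hdvd
    have hcop : IsCoprime t.num (t.den : ℤ) := by
      rw [Int.isCoprime_iff_gcd_eq_one]; exact t.reduced
    refine not_dvd_of_pow_eq hn hd (z := y * (t.den : ℚ) ^ m) ?_ hp.1.1
      (not_dvd_eval_scaleRoots hp hcop)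
    have h1 := scaleRoots_eval₂_mul (p := P) (Int.castRingHom ℚ) t (t.den : ℤ)
    have h2 : Int.castRingHom ℚ (t.den : ℤ) * t = Int.castRingHom ℚ t.num := by
      simp [Rat.den_mul_eq_num]
    rw [h2, eval₂_at_apply, hdeg] at h1
    have h3 : ((eval t.num (P.scaleRoots (t.den : ℤ)) : ℤ) : ℚ) =
        (t.den : ℚ) ^ (n * m) * aeval t P := by simpa [aeval_def] using h1
    rw [h3, mul_pow, hy, ← pow_mul, mul_comm m n]
    ring
  · exact not_dvd_of_pow_eq hn hd hy hp.1.1 hp.2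

/-- Counting admissible twists by the sieve over `goodPrimes P`. -/
lemma twists_isBigO {n N : ℕ} (hn : n ≠ 0) (hdvd : n ∣ N) {P : ℤ[X]} (hdeg : P.natDegree = N)
    (h : ∃ δ : ℝ, 0 < δ ∧ ∃ C : ℝ, ∀ᶠ s : ℝ in 𝓝[>] 1,
      δ * (-Real.log (s - 1)) - C ≤ primeSum (goodPrimes P) s) :
    ∃ α : ℝ, 0 < α ∧ α < 1 ∧
        (fun x : ℕ =>
            ({d : ℤ | NFree n d ∧ |d| ≤ (x : ℤ) ∧
              HasNontrivialPoint n N P d}.ncard : ℝ)) =O[atTop]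
          fun x : ℕ => (x : ℝ) * Real.log x ^ (-α) := by
  obtain ⟨δ, hδ, C, hC⟩ := h
  refine ⟨min δ (1 / 2), lt_min hδ (by norm_num), (min_le_right _ _).trans_lt (by norm_num), ?_⟩
  obtain ⟨B, hB⟩ := card_sifted_le (goodPrimes P) (fun p hp => hp.1.1) (min δ (1 / 2)) C (by
    have h2 : ∀ᶠ s : ℝ in 𝓝[>] 1, s < 2 := nhdsWithin_le_nhds (Iio_mem_nhds (by norm_num))
    filter_upwards [hC, h2, self_mem_nhdsWithin] with s hs hs2 (hs1 : 1 < s)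
    have hlog : 0 ≤ -Real.log (s - 1) := by
      rw [Left.nonneg_neg_iff]
      exact Real.log_nonpos (by linarith) (by linarith)
    have := mul_le_mul_of_nonneg_right (min_le_left δ (1 / 2)) hlog
    linarith)
  refine IsBigO.of_bound (2 * B) ?_
  filter_upwards [hB] with x hx
  set E : Finset ℕ := sifted (goodPrimes P) x with hE
  have hsub : {d : ℤ | NFree n d ∧ |d| ≤ (x : ℤ) ∧ HasNontrivialPoint n N P d} ⊆
      ((E.image (fun m : ℕ => (m : ℤ)) ∪ E.image (fun m : ℕ => -(m : ℤ)) : Finset ℤ) : Set ℤ) := by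
    rintro d ⟨hd, hdx, hpt⟩
    have hmem : d.natAbs ∈ E := by
      rw [hE, sifted]
      simp only [Finset.mem_filter, Finset.mem_Icc]
      refine ⟨⟨Int.natAbs_pos.mpr hd.1, by
        rw [Int.abs_eq_natAbs] at hdx; exact_mod_cast hdx⟩, fun p hp hpd => ?_⟩
      exact not_dvd_of_hasNontrivialPoint hn hdvd hdeg hd hpt hp (Int.natCast_dvd.mpr hpd)
    rw [Finset.coe_union, Finset.coe_image, Finset.coe_image]
    rcases Int.natAbs_eq d with h | h
    · exact Or.inl ⟨_, hmem, h.symm⟩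
    · exact Or.inr ⟨_, hmem, h.symm⟩
  have hcard := Set.ncard_le_ncard hsub (Finset.finite_toSet _)
  rw [Set.ncard_coe_finset] at hcard
  have h1 := hcard.trans (Finset.card_union_le _ _)
  have h2 := h1.trans (add_le_add Finset.card_image_le Finset.card_image_le)
  have h3 : ({d : ℤ | NFree n d ∧ |d| ≤ (x : ℤ) ∧ HasNontrivialPoint n N P d}.ncard : ℝ) ≤
      E.card + E.card := by exact_mod_cast h2
  rw [Real.norm_of_nonneg (by positivity),
    Real.norm_of_nonneg (mul_nonneg (by positivity)
      (Real.rpow_nonneg (Real.log_natCast_nonneg x) _))]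
  linarith

end Twists

/-! ### Counting reducible polynomials -/

section Counting

/-- The height of an integer polynomial. -/
def polyHeight (Q : ℤ[X]) : ℕ := Q.support.sup fun i => (Q.coeff i).natAbs

lemma natAbs_coeff_le_polyHeight (Q : ℤ[X]) (i : ℕ) : (Q.coeff i).natAbs ≤ polyHeight Q := by
  by_cases hi : i ∈ Q.support
  · exact Finset.le_sup (f := fun i => (Q.coeff i).natAbs) hi
  · simp [notMem_support_iff.mp hi]

lemma polyHeight_pos {Q : ℤ[X]} (hQ : Q ≠ 0) : 1 ≤ polyHeight Q :=
  le_trans (Int.natAbs_pos.mpr (leadingCoeff_ne_zero.mpr hQ))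
    (natAbs_coeff_le_polyHeight Q Q.natDegree)

lemma polyHeight_le_mahlerMeasure (Q : ℤ[X]) :
    (polyHeight Q : ℝ) ≤ 2 ^ Q.natDegree * (Q.map (Int.castRingHom ℂ)).mahlerMeasure := by
  have hdeg : (Q.map (Int.castRingHom ℂ)).natDegree = Q.natDegree :=
    natDegree_map_eq_of_injective (Int.castRingHom ℂ).injective_int Q
  have hcoeff : ∀ i, ((Q.coeff i).natAbs : ℝ) ≤
      2 ^ Q.natDegree * (Q.map (Int.castRingHom ℂ)).mahlerMeasure := by
    intro i
    have h1 := norm_coeff_le_choose_mul_mahlerMeasure i (Q.map (Int.castRingHom ℂ))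
    rw [coeff_map, eq_intCast, Complex.norm_intCast, hdeg] at h1
    rw [Nat.cast_natAbs, Int.cast_abs]
    refine h1.trans (mul_le_mul_of_nonneg_right ?_ (mahlerMeasure_nonneg _))
    exact_mod_cast Nat.choose_le_two_pow _ _
  rcases Q.support.eq_empty_or_nonempty with h | h
  · rw [polyHeight, h]
    simpa using mahlerMeasure_nonneg (Q.map (Int.castRingHom ℂ))
  · obtain ⟨i, -, hi⟩ := Finset.exists_mem_eq_sup _ h fun i => (Q.coeff i).natAbs
    rw [polyHeight, hi]
    exact hcoeff i

lemma mahlerMeasure_le_of_heightLE {P : ℤ[X]} {H : ℕ} (h : HeightLE P H) :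
    (P.map (Int.castRingHom ℂ)).mahlerMeasure ≤ (P.natDegree + 1) * H := by
  refine (mahlerMeasure_le_sum_norm_coeff _).trans ?_
  rw [sum_over_range _ (fun _ => norm_zero),
    natDegree_map_eq_of_injective (Int.castRingHom ℂ).injective_int]
  refine (Finset.sum_le_card_nsmul _ _ (H : ℝ) fun i _ => ?_).trans ?_
  · rw [coeff_map, eq_intCast, Complex.norm_intCast]
    exact_mod_cast h i
  · simp

/-- Gelfond's inequality, from the multiplicativity of the Mahler measure. -/
lemma polyHeight_mul_le {Q R : ℤ[X]} {N H : ℕ} (hdeg : Q.natDegree + R.natDegree = N)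
    (hQR : Q * R ≠ 0) (h : HeightLE (Q * R) H) :
    polyHeight Q * polyHeight R ≤ 2 ^ N * (N + 1) * H := by
  have h1 := mahlerMeasure_le_of_heightLE h
  rw [Polynomial.map_mul, mahlerMeasure_mul,
    natDegree_mul (left_ne_zero_of_mul hQR) (right_ne_zero_of_mul hQR), hdeg] at h1
  have hQ := polyHeight_le_mahlerMeasure Q
  have hR := polyHeight_le_mahlerMeasure R
  have h2 : (polyHeight Q : ℝ) * polyHeight R ≤ 2 ^ N * ((N + 1) * H) := by
    refine (mul_le_mul hQ hR (by positivity)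
      (mul_nonneg (by positivity) (mahlerMeasure_nonneg _))).trans ?_
    rw [mul_mul_mul_comm, ← pow_add, hdeg]
    exact mul_le_mul_of_nonneg_left h1 (by positivity)
  have h3 : ((polyHeight Q * polyHeight R : ℕ) : ℝ) ≤ ((2 ^ N * (N + 1) * H : ℕ) : ℝ) := by
    push_cast; linarith
  exact_mod_cast h3

/-- Gauss's lemma: a reducible polynomial over `ℚ` with integer coefficients splits over `ℤ` into
factors of positive degree. -/
lemma exists_factorization {P : ℤ[X]} (hP : 1 ≤ P.natDegree)
    (hred : ¬ Irreducible (P.map (Int.castRingHom ℚ))) :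
    ∃ Q R : ℤ[X], P = Q * R ∧ 1 ≤ Q.natDegree ∧ 1 ≤ R.natDegree := by
  have hP0 : P ≠ 0 := by rintro rfl; simp at hP
  have hprim := P.isPrimitive_primPart
  have hred' : ¬ Irreducible P.primPart := by
    rw [IsPrimitive.Int.irreducible_iff_irreducible_map_cast hprim]
    intro h
    apply hred
    have hc : IsUnit (C (Int.castRingHom ℚ P.content)) := by
      refine isUnit_C.mpr (IsUnit.mk0 _ ?_)
      simpa [content_eq_zero_iff] using hP0
    rw [P.eq_C_content_mul_primPart, Polynomial.map_mul, map_C]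
    exact (irreducible_isUnit_mul hc).mpr h
  have hunit : ∀ Q : ℤ[X], Q ∣ P.primPart → Q.natDegree = 0 → IsUnit Q := by
    intro Q hQ h0
    rw [eq_C_of_natDegree_eq_zero h0]
    refine isUnit_C.mpr (isPrimitive_of_dvd hprim hQ _ ?_)
    rw [← eq_C_of_natDegree_eq_zero h0]
  rw [irreducible_iff, not_and_or] at hred'
  rcases hred' with h | h
  · have h0 := natDegree_eq_zero_of_isUnit (not_not.mp h)
    rw [natDegree_primPart] at h0
    omega
  · push Not at h
    obtain ⟨Q, R, hQR, hQ, hR⟩ := h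
    refine ⟨C P.content * Q, R, ?_, ?_, ?_⟩
    · rw [mul_assoc, ← hQR]; exact P.eq_C_content_mul_primPart
    · rw [natDegree_C_mul (by simpa [content_eq_zero_iff] using hP0)]
      by_contra hlt
      exact hQ (hunit Q (hQR ▸ dvd_mul_right Q R) (by omega))
    · by_contra hlt
      exact hR (hunit R (hQR ▸ dvd_mul_left R Q) (by omega))

/-- The polynomial with coefficient vector `v`. -/
noncomputable def ofCoeffs {k : ℕ} (v : Fin k → ℤ) : ℤ[X] := ∑ i : Fin k, monomial (i : ℕ) (v i)

lemma coeff_ofCoeffs {k : ℕ} (v : Fin k → ℤ) (j : Fin k) : (ofCoeffs v).coeff j = v j := by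
  rw [ofCoeffs, finsetSum_coeff, Finset.sum_eq_single j]
  · simp
  · intro i _ hij
    rw [coeff_monomial, if_neg fun h => hij (Fin.ext h)]
  · simp

lemma coeff_ofCoeffs_of_le {k : ℕ} (v : Fin k → ℤ) {j : ℕ} (hj : k ≤ j) :
    (ofCoeffs v).coeff j = 0 := by
  rw [ofCoeffs, finsetSum_coeff]
  refine Finset.sum_eq_zero fun i _ => ?_
  rw [coeff_monomial, if_neg (by omega)]

lemma ofCoeffs_injective (k : ℕ) : Function.Injective (ofCoeffs (k := k)) := fun v w h => by
  funext j
  rw [← coeff_ofCoeffs v j, h, coeff_ofCoeffs]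

open Classical in
/-- A finite set containing the integer polynomials of degree at most `k` and height at most
`h`. -/
noncomputable def polyBox (k h : ℕ) : Finset ℤ[X] :=
  (Fintype.piFinset fun _ : Fin (k + 1) => Finset.Icc (-(h : ℤ)) h).image ofCoeffs

lemma mem_polyBox {k h : ℕ} {Q : ℤ[X]} (hk : Q.natDegree ≤ k) (hh : polyHeight Q ≤ h) :
    Q ∈ polyBox k h := by
  rw [polyBox, Finset.mem_image]
  refine ⟨fun i => Q.coeff i, ?_, ?_⟩
  · rw [Fintype.mem_piFinset]
    intro i
    have := (natAbs_coeff_le_polyHeight Q i).trans hh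
    rw [Finset.mem_Icc]
    omega
  · rw [ofCoeffs, Fin.sum_univ_eq_sum_range (fun i => monomial i (Q.coeff i)) (k + 1)]
    exact (Q.as_sum_range' (k + 1) (by omega)).symm

lemma card_polyBox_le {k h : ℕ} (hh : 1 ≤ h) : (polyBox k h).card ≤ (3 * h) ^ (k + 1) := by
  refine Finset.card_image_le.trans ?_
  rw [Fintype.card_piFinset, Finset.prod_const, Finset.card_univ, Fintype.card_fin, Int.card_Icc]
  exact Nat.pow_le_pow_left (by omega) _

/-- The integer polynomials of degree `N` and height at most `H`. -/
def degHeightSet (N H : ℕ) : Set ℤ[X] := {P | P.natDegree = N ∧ P ≠ 0 ∧ HeightLE P H}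

lemma degHeightSet_finite (N H : ℕ) : (degHeightSet N H).Finite := by
  refine (polyBox N H).finite_toSet.subset fun P hP => mem_polyBox hP.1.le ?_
  refine Finset.sup_le fun i _ => ?_
  have := hP.2.2 i
  rw [Int.abs_eq_natAbs] at this
  exact_mod_cast this

lemma pow_le_ncard_degHeightSet (N H : ℕ) : H ^ (N + 1) ≤ (degHeightSet N H).ncard := by
  classical
  set A : Finset ℤ[X] :=
    (Fintype.piFinset fun _ : Fin (N + 1) => Finset.Icc (1 : ℤ) H).image ofCoeffs with hA
  have hcard : A.card = H ^ (N + 1) := by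
    rw [hA, Finset.card_image_of_injective _ (ofCoeffs_injective _), Fintype.card_piFinset,
      Finset.prod_const, Finset.card_univ, Fintype.card_fin, Int.card_Icc]
    simp
  rw [← hcard, ← Set.ncard_coe_finset]
  refine Set.ncard_le_ncard (fun P hP => ?_) (degHeightSet_finite N H)
  obtain ⟨v, hv, rfl⟩ := Finset.mem_image.mp (Finset.mem_coe.mp hP)
  rw [Fintype.mem_piFinset] at hv
  have hlead : (ofCoeffs v).coeff N ≠ 0 := by
    have h1 := coeff_ofCoeffs v (Fin.last N)
    have h2 := Finset.mem_Icc.mp (hv (Fin.last N))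
    rw [Fin.val_last] at h1
    omega
  refine ⟨natDegree_eq_of_le_of_coeff_ne_zero (natDegree_le_iff_coeff_eq_zero.mpr
    fun j hj => coeff_ofCoeffs_of_le v hj) hlead, fun h0 => hlead (by rw [h0, coeff_zero]),
    fun i => ?_⟩
  by_cases hi : i < N + 1
  · have h1 := coeff_ofCoeffs v ⟨i, hi⟩
    have h2 := Finset.mem_Icc.mp (hv ⟨i, hi⟩)
    simp only at h1
    rw [h1, abs_le]
    omega
  · rw [coeff_ofCoeffs_of_le v (by omega)]
    simp

/-- The reducible polynomials of degree `N` and height at most `H` are few. A factor `Q` has height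
in some dyadic interval `[2 ^ j, 2 ^ (j + 1))`, and its cofactor then has height at most
`Y / 2 ^ j`, where `Y` is a constant multiple of `H`. -/
lemma ncard_reducible_le {N H : ℕ} (hN : 2 ≤ N) (hH : 1 ≤ H) :
    {P ∈ degHeightSet N H | ¬ Irreducible (P.map (Int.castRingHom ℚ))}.ncard ≤
      N * (Nat.log 2 (2 ^ N * (N + 1) * H) + 1) *
        (6 ^ (N + 2) * (2 ^ N * (N + 1) * H) ^ N) := by
  classical
  set Y := 2 ^ N * (N + 1) * H with hY
  have hYpos : Y ≠ 0 := by positivity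
  set ι : Finset (ℕ × ℕ) := Finset.Ico 1 N ×ˢ Finset.range (Nat.log 2 Y + 1) with hι
  set box : ℕ × ℕ → Finset ℤ[X] := fun kj =>
    (polyBox kj.1 (2 * 2 ^ kj.2) ×ˢ polyBox (N - kj.1) (Y / 2 ^ kj.2)).image fun QR => QR.1 * QR.2
    with hbox
  have hsub : {P ∈ degHeightSet N H | ¬ Irreducible (P.map (Int.castRingHom ℚ))} ⊆
      (ι.biUnion box : Finset ℤ[X]) := by
    rintro P ⟨⟨hdeg, hP0, hht⟩, hred⟩
    obtain ⟨Q, R, rfl, hQ, hR⟩ := exists_factorization (by omega) hred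
    rw [natDegree_mul (left_ne_zero_of_mul hP0) (right_ne_zero_of_mul hP0)] at hdeg
    have hle := polyHeight_mul_le hdeg hP0 hht
    have hQ1 := polyHeight_pos (left_ne_zero_of_mul hP0)
    have hR1 := polyHeight_pos (right_ne_zero_of_mul hP0)
    set j := Nat.log 2 (polyHeight Q) with hj
    have hj1 : 2 ^ j ≤ polyHeight Q := Nat.pow_log_le_self 2 (by omega)
    have hj2 : polyHeight Q < 2 ^ (j + 1) := Nat.lt_pow_succ_log_self (by norm_num) _
    have hjY : j ≤ Nat.log 2 Y :=
      Nat.log_mono_right ((Nat.le_mul_of_pos_right _ hR1).trans hle)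
    rw [Finset.mem_coe, Finset.mem_biUnion]
    refine ⟨(Q.natDegree, j), ?_, ?_⟩
    · rw [hι, Finset.mem_product, Finset.mem_Ico, Finset.mem_range]
      dsimp only
      omega
    · rw [hbox, Finset.mem_image]
      refine ⟨(Q, R), Finset.mem_product.mpr ⟨mem_polyBox le_rfl ?_, mem_polyBox ?_ ?_⟩, rfl⟩
      · dsimp only; rw [pow_succ] at hj2; omega
      · dsimp only; omega
      · dsimp only
        rw [Nat.le_div_iff_mul_le (by positivity), mul_comm]
        exact (Nat.mul_le_mul_right _ hj1).trans hle
  have hcard : ∀ kj ∈ ι, (box kj).card ≤ 6 ^ (N + 2) * Y ^ N := by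
    rintro ⟨k, j⟩ hkj
    rw [hι, Finset.mem_product, Finset.mem_Ico, Finset.mem_range] at hkj
    obtain ⟨⟨hk1, hk2⟩, hj⟩ := hkj
    dsimp only at hk1 hk2 hj
    have hjY : 2 ^ j ≤ Y := Nat.pow_le_of_le_log hYpos (by omega)
    have hdiv : 1 ≤ Y / 2 ^ j := (Nat.one_le_div_iff (by positivity)).mpr hjY
    have hpow : 1 ≤ 2 ^ j := Nat.one_le_two_pow
    have hprod : 2 ^ j * (Y / 2 ^ j) ≤ Y := Nat.mul_div_le _ _
    set a := 2 ^ j with ha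
    set b := Y / 2 ^ j with hb
    calc (box (k, j)).card ≤ (polyBox k (2 * a)).card * (polyBox (N - k) b).card := by
          refine Finset.card_image_le.trans ?_
          rw [Finset.card_product]
      _ ≤ (3 * (2 * a)) ^ (k + 1) * (3 * b) ^ (N - k + 1) :=
          Nat.mul_le_mul (card_polyBox_le (by omega)) (card_polyBox_le hdiv)
      _ ≤ (6 * a) ^ (k + 1) * (6 * b) ^ (N - k + 1) :=
          Nat.mul_le_mul (Nat.pow_le_pow_left (by omega) _) (Nat.pow_le_pow_left (by omega) _)
      _ = 6 ^ (N + 2) * (a ^ (k + 1) * b ^ (N - k + 1)) := by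
          rw [mul_pow, mul_pow, mul_mul_mul_comm, ← pow_add]
          congr 2
          omega
      _ ≤ 6 ^ (N + 2) * (a ^ N * b ^ N) :=
          Nat.mul_le_mul_left _ (Nat.mul_le_mul (Nat.pow_le_pow_right hpow (by omega))
            (Nat.pow_le_pow_right hdiv (by omega)))
      _ ≤ 6 ^ (N + 2) * Y ^ N := by
          rw [← mul_pow]
          exact Nat.mul_le_mul_left _ (Nat.pow_le_pow_left hprod _)
  have h1 := Set.ncard_le_ncard hsub (Finset.finite_toSet _)
  rw [Set.ncard_coe_finset] at h1
  refine h1.trans (Finset.card_biUnion_le.trans ((Finset.sum_le_card_nsmul _ _ _ hcard).trans ?_))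
  rw [smul_eq_mul, hι, Finset.card_product, Nat.card_Ico, Finset.card_range]
  exact Nat.mul_le_mul_right _ (Nat.mul_le_mul_right _ (by omega))

lemma mem_polySet_of_irreducible {n : ℕ} (hn : 2 ≤ n) {P : ℤ[X]}
    (hirr : Irreducible (P.map (Int.castRingHom ℚ))) : P ∈ PolySet n P.natDegree := by
  refine ⟨rfl, fun h => hirr.ne_zero (by rw [h, Polynomial.map_zero]), fun z => ?_⟩
  have hsep : (P.map (Int.castRingHom ℂ)).Separable := by
    have h := hirr.separable.map (f := algebraMap ℚ ℂ)
    rwa [Polynomial.map_map, RingHom.ext_int ((algebraMap ℚ ℂ).comp (Int.castRingHom ℚ))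
      (Int.castRingHom ℂ)] at h
  exact (rootMultiplicity_le_one_of_separable hsep z).trans (by omega)

/-- The members of `𝒫(n,N)` that are irreducible over `ℚ`. -/
def irredSet (n N : ℕ) : Set ℤ[X] :=
  {P ∈ PolySet n N | Irreducible (P.map (Int.castRingHom ℚ))}

lemma exists_ncard_reducible_le {N : ℕ} (hN : 2 ≤ N) : ∃ A : ℝ, 0 < A ∧ ∀ H : ℕ, 2 ≤ H →
    ({P ∈ degHeightSet N H | ¬ Irreducible (P.map (Int.castRingHom ℚ))}.ncard : ℝ) ≤
      A * ((H : ℝ) ^ N * Real.log H) := by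
  set c : ℝ := 2 ^ N * (N + 1) with hc
  have hc1 : 1 ≤ c := by
    have h1 : (1 : ℝ) ≤ 2 ^ N := one_le_pow₀ (by norm_num)
    have h2 : (1 : ℝ) ≤ N + 1 := by
      have : (0 : ℝ) ≤ N := by positivity
      linarith
    nlinarith
  have hl2 : 0 < Real.log 2 := Real.log_pos (by norm_num)
  have hlc : 0 ≤ Real.log c := Real.log_nonneg hc1
  set b : ℝ := (Real.log c / Real.log 2 + 2) / Real.log 2 with hb
  have hb0 : 0 < b := by positivity
  have hN0 : (0 : ℝ) < N := by exact_mod_cast (by omega : 0 < N)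
  refine ⟨N * b * (6 ^ (N + 2) * c ^ N), by positivity, fun H hH => ?_⟩
  have hH2 : (2 : ℝ) ≤ H := by exact_mod_cast hH
  have hlog : Real.log 2 ≤ Real.log H := Real.log_le_log (by norm_num) hH2
  have hnat := ncard_reducible_le hN (show 1 ≤ H by omega)
  have hreal : ({P ∈ degHeightSet N H | ¬ Irreducible (P.map (Int.castRingHom ℚ))}.ncard : ℝ) ≤
      N * ((Nat.log 2 (2 ^ N * (N + 1) * H) : ℝ) + 1) * (6 ^ (N + 2) * (c * H) ^ N) := by
    have : ({P ∈ degHeightSet N H | ¬ Irreducible (P.map (Int.castRingHom ℚ))}.ncard : ℝ) ≤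
      ((N * (Nat.log 2 (2 ^ N * (N + 1) * H) + 1) *
        (6 ^ (N + 2) * (2 ^ N * (N + 1) * H) ^ N) : ℕ) : ℝ) := by exact_mod_cast hnat
    refine this.trans (le_of_eq ?_)
    push_cast
    rw [hc]
  have hl : (Nat.log 2 (2 ^ N * (N + 1) * H) : ℝ) + 1 ≤ b * Real.log H := by
    have h1 := Real.natLog_le_logb (2 ^ N * (N + 1) * H) 2
    have h2 : Real.logb (2 : ℕ) ((2 ^ N * (N + 1) * H : ℕ) : ℝ) =
        (Real.log c + Real.log H) / Real.log 2 := by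
      rw [Real.logb, ← Real.log_mul (by positivity) (by positivity), hc]
      push_cast
      rfl
    rw [h2] at h1
    refine (add_le_add_left h1 1).trans ?_
    have h3 : Real.log c ≤ Real.log c / Real.log 2 * Real.log H := by
      rw [div_mul_eq_mul_div, le_div_iff₀ hl2]
      exact mul_le_mul_of_nonneg_left hlog hlc
    rw [hb, div_mul_eq_mul_div, div_add_one hl2.ne']
    refine div_le_div_of_nonneg_right ?_ hl2.le
    linarith
  calc _ ≤ _ := hreal
    _ ≤ N * (b * Real.log H) * (6 ^ (N + 2) * (c * H) ^ N) := by gcongr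
    _ = _ := by rw [mul_pow]; ring

/-- Almost all polynomials are irreducible. The reducible ones even have proportion
`O(log H / H)`. -/
lemma irredSet_density {n N : ℕ} (hn : 2 ≤ n) (hN : 2 ≤ N) :
    (fun H : ℕ => (1 : ℝ) - ((irredSet n N ∩ {P | HeightLE P H}).ncard : ℝ) /
        ((PolySet n N ∩ {P | HeightLE P H}).ncard : ℝ)) =O[atTop]
      fun H : ℕ => Real.log H / Real.sqrt H := by
  obtain ⟨A, hA, hred⟩ := exists_ncard_reducible_le hN
  refine IsBigO.of_bound (2 * A) ?_
  have hlogo : ∀ᶠ H : ℕ in atTop, A * Real.log H ≤ H / 2 := by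
    have h := (Real.isLittleO_log_id_atTop.comp_tendsto
      (tendsto_natCast_atTop_atTop (R := ℝ))).bound (show 0 < 1 / (2 * A) by positivity)
    filter_upwards [h] with H h
    simp only [Function.comp_apply, id, Real.norm_natCast] at h
    have h1 := (Real.le_norm_self _).trans h
    have h2 := mul_le_mul_of_nonneg_left h1 hA.le
    refine h2.trans (le_of_eq ?_)
    field_simp
  filter_upwards [hlogo, eventually_ge_atTop 2] with H hlogH hH
  have hH2 : (2 : ℝ) ≤ H := by exact_mod_cast hH
  have hlog0 : 0 ≤ Real.log H := Real.log_nonneg (by linarith)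
  have hr := hred H hH
  set 𝒜 := degHeightSet N H with h𝒜
  set 𝓡 := {P ∈ 𝒜 | ¬ Irreducible (P.map (Int.castRingHom ℚ))} with h𝓡
  set 𝓘 := irredSet n N ∩ {P | HeightLE P H} with h𝓘
  set 𝓣 := PolySet n N ∩ {P | HeightLE P H} with h𝓣
  have hfin : 𝒜.Finite := degHeightSet_finite N H
  have hT𝒜 : 𝓣 ⊆ 𝒜 := fun P hP => ⟨hP.1.1, hP.1.2.1, hP.2⟩
  have hIT : 𝓘 ⊆ 𝓣 := fun P hP => ⟨hP.1.1, hP.2⟩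
  have hcov : 𝒜 ⊆ 𝓘 ∪ 𝓡 := by
    intro P hP
    by_cases hirr : Irreducible (P.map (Int.castRingHom ℚ))
    · exact Or.inl ⟨⟨hP.1 ▸ mem_polySet_of_irreducible hn hirr, hirr⟩, hP.2.2⟩
    · exact Or.inr ⟨hP, hirr⟩
  have hfinIR : (𝓘 ∪ 𝓡).Finite :=
    ((hfin.subset hT𝒜).subset hIT).union (hfin.subset fun P hP => hP.1)
  have h1 : (H : ℝ) ^ (N + 1) ≤ 𝒜.ncard := by exact_mod_cast pow_le_ncard_degHeightSet N H
  have h2 : (𝒜.ncard : ℝ) ≤ 𝓘.ncard + 𝓡.ncard := by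
    exact_mod_cast (Set.ncard_le_ncard hcov hfinIR).trans (Set.ncard_union_le _ _)
  have h3 : (𝓘.ncard : ℝ) ≤ 𝓣.ncard := by
    exact_mod_cast Set.ncard_le_ncard hIT (hfin.subset hT𝒜)
  have h4 : (𝓣.ncard : ℝ) ≤ 𝒜.ncard := by exact_mod_cast Set.ncard_le_ncard hT𝒜 hfin
  have hHN : 0 < (H : ℝ) ^ N := by positivity
  have h5 : A * ((H : ℝ) ^ N * Real.log H) ≤ (H : ℝ) ^ (N + 1) / 2 := by
    have := mul_le_mul_of_nonneg_left hlogH hHN.le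
    rw [pow_succ]
    linarith
  have hTlow : (H : ℝ) ^ (N + 1) / 2 ≤ 𝓣.ncard := by linarith
  have hTpos : (0 : ℝ) < 𝓣.ncard := lt_of_lt_of_le (by positivity) hTlow
  have heq : 1 - (𝓘.ncard : ℝ) / 𝓣.ncard = (𝓣.ncard - 𝓘.ncard) / 𝓣.ncard := by
    field_simp
  rw [heq, Real.norm_of_nonneg (div_nonneg (by linarith) hTpos.le),
    Real.norm_of_nonneg (div_nonneg hlog0 (Real.sqrt_nonneg _))]
  have hsqrt : Real.sqrt H ≤ H := Real.sqrt_le_iff.mpr ⟨by linarith, by nlinarith⟩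
  have hsqrt0 : 0 < Real.sqrt H := Real.sqrt_pos.mpr (by linarith)
  calc ((𝓣.ncard : ℝ) - 𝓘.ncard) / 𝓣.ncard
      ≤ A * ((H : ℝ) ^ N * Real.log H) / ((H : ℝ) ^ (N + 1) / 2) :=
        div_le_div₀ (by positivity) (by linarith) (by positivity) hTlow
    _ = 2 * A * (Real.log H / H) := by
        rw [pow_succ]; field_simp
    _ ≤ 2 * A * (Real.log H / Real.sqrt H) := by gcongr

/-- For constant polynomials every member is admissible, so the density is exactly `1`. -/
lemma constant_density (n : ℕ) :
    (fun H : ℕ => (1 : ℝ) - ((PolySet n 0 ∩ {P | HeightLE P H}).ncard : ℝ) /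
        ((PolySet n 0 ∩ {P | HeightLE P H}).ncard : ℝ)) =O[atTop]
      fun H : ℕ => Real.log H / Real.sqrt H := by
  refine IsBigO.of_bound 1 ?_
  filter_upwards [eventually_ge_atTop 1] with H hH
  have hfin : (PolySet n 0 ∩ {P | HeightLE P H}).Finite :=
    (degHeightSet_finite 0 H).subset fun P hP => ⟨hP.1.1, hP.1.2.1, hP.2⟩
  have hmem : (1 : ℤ[X]) ∈ PolySet n 0 ∩ {P | HeightLE P H} := by
    refine ⟨⟨natDegree_one, one_ne_zero, fun z => by
      rw [Polynomial.map_one, ← C_1, rootMultiplicity_C]; exact Nat.zero_le _⟩, fun i => ?_⟩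
    rw [coeff_one]
    split_ifs
    · simpa using hH
    · simp
  have hpos := (Set.ncard_pos hfin).mpr ⟨1, hmem⟩
  rw [div_self (by positivity), sub_self, norm_zero]
  positivity

end Counting

theorem stmt0 (n N : ℕ) (hn : 2 ≤ n) (hdvd : n ∣ N) :
    ∃ S' ⊆ PolySet n N,
      ((fun H : ℕ => (1 : ℝ) -
          ((S' ∩ {P | HeightLE P H}).ncard : ℝ) /
            ((PolySet n N ∩ {P | HeightLE P H}).ncard : ℝ)) =O[atTop]
        fun H : ℕ => Real.log H / Real.sqrt H) ∧
      ∀ P ∈ S', ∃ α : ℝ, 0 < α ∧ α < 1 ∧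
        (fun x : ℕ =>
            ({d : ℤ | NFree n d ∧ |d| ≤ (x : ℤ) ∧
              HasNontrivialPoint n N P d}.ncard : ℝ)) =O[atTop]
          fun x : ℕ => (x : ℝ) * Real.log x ^ (-α) := by
  rcases Nat.eq_zero_or_pos N with rfl | hN
  · exact ⟨PolySet n 0, subset_rfl, constant_density n, fun P hP =>
      twists_isBigO (by omega) hdvd hP.1 (le_primeSum_goodPrimes_of_natDegree_eq_zero hP.2.1 hP.1)⟩
  · have hN2 : 2 ≤ N := hn.trans (Nat.le_of_dvd hN hdvd)
    exact ⟨irredSet n N, fun P hP => hP.1, irredSet_density hn hN2, fun P hP =>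
      twists_isBigO (by omega) hdvd hP.1.1
        (le_primeSum_goodPrimes_of_irreducible hP.2 (by rw [hP.1.1]; exact hN2))⟩
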